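/- arXiv:1601.07276 — 2 statements merged into one kernel-verified Lean document; each statement's English description precedes it below -/
import Mathlib

section
/- There exists a bounded sequence w = (w_n)_{n≥1} of nonzero scalars such that the weighted backward shift B_w on c₀ is frequently hypercyclic but not chaotic. -/
open Filter Topology
open scoped Classical ZeroAtInfty

/-- Upper density of a set of natural numbers. -/
noncomputable def upperDensity (A : Set ℕ) : ℝ :=
  Filter.limsup
    (fun N : ℕ => (((Finset.range (N + 1)).filter (fun n => n ∈ A)).card : ℝ) / ((N : ℝ) + 1))
    Filter.atTop

/-- Lower density of a set of natural numbers. -/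
noncomputable def lowerDensity (A : Set ℕ) : ℝ :=
  Filter.liminf
    (fun N : ℕ => (((Finset.range (N + 1)).filter (fun n => n ∈ A)).card : ℝ) / ((N : ℝ) + 1))
    Filter.atTop

/-- Upper Banach density of a set of natural numbers. -/
noncomputable def upperBanachDensity (A : Set ℕ) : ℝ :=
  ⨅ N : ℕ, ⨆ m : ℕ, (((Finset.Icc m (m + N)).filter (fun n => n ∈ A)).card : ℝ) / ((N : ℝ) + 1)


lemma dvd_of_eq_rhs {a b c : ℤ} (h : a ∣ b) (e : c = b) : a ∣ c := e ▸ h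

/-- The bad positions. -/
def aSeq : ℕ → ℕ
  | 0 => 0
  | k + 1 => 4 * aSeq k + 1

lemma aSeq_eq (k : ℕ) : 3 * aSeq k + 1 = 4 ^ k := by
  induction k with
  | zero => simp [aSeq]
  | succ k ih => rw [aSeq, pow_succ, ← ih]; ring

lemma aSeq_mono : Monotone aSeq := by
  refine monotone_nat_of_le_succ fun k => ?_
  rw [aSeq]; omega

lemma aSeq_ge (k : ℕ) : k ≤ aSeq k := by
  induction k with
  | zero => simp
  | succ k ih => rw [aSeq]; omega

lemma aSeq_dvd (s i : ℕ) : ((4 ^ s : ℕ) : ℤ) ∣ (aSeq (s + i) : ℤ) - aSeq s := by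
  induction i with
  | zero => simp
  | succ i ih =>
    have h : (aSeq (s + (i + 1)) : ℤ) - aSeq s = (aSeq (s + i) - aSeq s) + ((4 ^ s : ℕ) : ℤ) * 4 ^ i := by
      have h1 := aSeq_eq (s + i)
      have h2 : aSeq (s + (i + 1)) = 4 * aSeq (s + i) + 1 := rfl
      have h3 : (4 ^ s : ℕ) * 4 ^ i = 3 * aSeq (s + i) + 1 := by rw [h1, pow_add]
      have h4 : ((4 ^ s : ℕ) : ℤ) * 4 ^ i = 3 * aSeq (s + i) + 1 := by exact_mod_cast h3
      rw [h4, h2]; push_cast; ring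
    rw [h]
    exact dvd_add ih (dvd_mul_right _ _)

lemma aSeq_dvd' {s k : ℕ} (h : s ≤ k) : ((4 ^ s : ℕ) : ℤ) ∣ (aSeq k : ℤ) - aSeq s := by
  obtain ⟨i, rfl⟩ := Nat.exists_eq_add_of_le h
  exact aSeq_dvd s i

/-- Exponents of the weight products. -/
noncomputable def eSeq : ℕ → ℕ
  | 0 => 0
  | n + 1 => if (∃ k, aSeq k = n + 1) then 0 else eSeq n + 1

lemma eSeq_spec (n : ℕ) : ∃ k, n = aSeq k + eSeq n := by
  induction n with
  | zero => exact ⟨0, rfl⟩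
  | succ n ih =>
    by_cases h : ∃ k, aSeq k = n + 1
    · obtain ⟨k, hk⟩ := h
      refine ⟨k, ?_⟩
      rw [eSeq, if_pos ⟨k, hk⟩]; omega
    · obtain ⟨k, hk⟩ := ih
      refine ⟨k, ?_⟩
      rw [eSeq, if_neg h]; omega

lemma eSeq_succ_le (n : ℕ) : eSeq (n + 1) ≤ eSeq n + 1 := by
  rw [eSeq]; split_ifs <;> omega

lemma eSeq_aSeq (k : ℕ) : eSeq (aSeq k) = 0 := by
  cases k with
  | zero => rfl
  | succ k =>
    have : aSeq (k + 1) = 4 * aSeq k + 1 := rfl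
    rw [this, eSeq, if_pos ⟨k + 1, this⟩]

lemma eSeq_aSeq_add (k j : ℕ) : eSeq (aSeq k + j) ≤ j := by
  induction j with
  | zero => simp [eSeq_aSeq]
  | succ j ih => exact (eSeq_succ_le (aSeq k + j)).trans (by omega)

lemma eSeq_le (n : ℕ) : eSeq n ≤ n := by
  obtain ⟨k, hk⟩ := eSeq_spec n
  omega

lemma eSeq_lt_of_far {n M : ℕ} (h : ∀ k, (M : ℤ) < |(n : ℤ) - aSeq k|) : M < eSeq n := by
  obtain ⟨k, hk⟩ := eSeq_spec n
  have := h k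
  have h2 : (n : ℤ) - aSeq k = eSeq n := by omega
  rw [h2, abs_of_nonneg (by positivity)] at this
  exact_mod_cast this

/-- The moduli exponents. -/
def sSeq (L : ℕ → ℕ) : ℕ → ℕ
  | 0 => 24 * (2 * L 0 + 1)
  | q + 1 => 24 * 2 ^ (q + 1) * 4 ^ (sSeq L q) * (2 * L (q + 1) + 1)

/-- The moduli. -/
def nSeq (L : ℕ → ℕ) (q : ℕ) : ℕ := 4 ^ sSeq L q

lemma sSeq_ge (L : ℕ → ℕ) (q : ℕ) : 24 * (2 * L q + 1) ≤ sSeq L q := by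
  cases q with
  | zero => rfl
  | succ q =>
    rw [sSeq]
    have : 1 ≤ 2 ^ (q + 1) * 4 ^ (sSeq L q) := Nat.one_le_iff_ne_zero.2 (by positivity)
    calc 24 * (2 * L (q + 1) + 1) = 24 * 1 * (2 * L (q + 1) + 1) := by ring
      _ ≤ 24 * (2 ^ (q + 1) * 4 ^ (sSeq L q)) * (2 * L (q + 1) + 1) := by gcongr
      _ = _ := by ring

lemma sSeq_le_nSeq (L : ℕ → ℕ) (q : ℕ) : sSeq L q < nSeq L q :=
  Nat.lt_pow_self (by norm_num)

lemma sSeq_strictMono (L : ℕ → ℕ) : StrictMono (sSeq L) := by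
  refine strictMono_nat_of_lt_succ fun q => ?_
  rw [sSeq]
  have h1 := sSeq_le_nSeq L q
  have h2 : 1 ≤ 24 * 2 ^ (q + 1) * (2 * L (q + 1) + 1) := Nat.one_le_iff_ne_zero.2 (by positivity)
  calc sSeq L q < 1 * 4 ^ (sSeq L q) := by simpa [nSeq] using h1
    _ ≤ (24 * 2 ^ (q + 1) * (2 * L (q + 1) + 1)) * 4 ^ (sSeq L q) := by gcongr
    _ = _ := by ring

lemma nSeq_mono (L : ℕ → ℕ) : Monotone (nSeq L) := fun _ _ h =>
  Nat.pow_le_pow_right (by norm_num) ((sSeq_strictMono L).monotone h)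

lemma nSeq_big (L : ℕ → ℕ) (q : ℕ) : 24 * (2 * L q + 1) < nSeq L q :=
  (sSeq_ge L q).trans_lt (sSeq_le_nSeq L q)

lemma nSeq_gap (L : ℕ → ℕ) (q : ℕ) :
    24 * 2 ^ (q + 1) * nSeq L q * (2 * L (q + 1) + 1) * (sSeq L (q + 1) + 1) ≤ nSeq L (q + 1) := by
  have h : 24 * 2 ^ (q + 1) * nSeq L q * (2 * L (q + 1) + 1) = sSeq L (q + 1) := rfl
  rw [h, nSeq]
  have h1 : sSeq L (q + 1) < 2 ^ sSeq L (q + 1) := Nat.lt_two_pow_self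
  calc sSeq L (q + 1) * (sSeq L (q + 1) + 1) ≤ 2 ^ sSeq L (q + 1) * 2 ^ sSeq L (q + 1) := by
        gcongr; omega
    _ = _ := by rw [← mul_pow]; norm_num

lemma a_s (L : ℕ → ℕ) (q : ℕ) : 3 * aSeq (sSeq L q) + 1 = nSeq L q := aSeq_eq _

/-- Reduction of a bad position modulo `nSeq L q`. -/
lemma reduce (L : ℕ → ℕ) (q k : ℕ) :
    ∃ j ≤ sSeq L q, (nSeq L q : ℤ) ∣ (aSeq k : ℤ) - aSeq j := by
  rcases le_total k (sSeq L q) with h | h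
  · exact ⟨k, h, by simp⟩
  · exact ⟨_, le_rfl, aSeq_dvd' h⟩

/-- The removed sets. -/
def RSet (L : ℕ → ℕ) (q : ℕ) : Set ℕ :=
  {n | nSeq L q ≤ 2 * n ∧ ∃ j ≤ sSeq L q, ∃ u : ℤ, |u| ≤ L q ∧
    ((nSeq L q : ℤ) ∣ (n : ℤ) - (aSeq j + u) ∨ (nSeq L q : ℤ) ∣ (n : ℤ) - (-aSeq j + u))}

/-- The return sets. -/
def ESet (L : ℕ → ℕ) (p : ℕ) : Set ℕ :=
  {n | nSeq L p ∣ n ∧ nSeq L p ≤ n ∧ ∀ q, p < q → n ∉ RSet L q}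

lemma far_of_dvd (L : ℕ → ℕ) (p k : ℕ) (d : ℤ) (h1 : (nSeq L p : ℤ) ∣ d) (h2 : (nSeq L p : ℤ) ≤ d) :
    (L p : ℤ) < |d - aSeq k| := by
  by_contra hc
  push Not at hc
  rw [abs_le] at hc
  have hN := nSeq_big L p
  have ha := a_s L p
  rcases le_total k (sSeq L p) with h | h
  · have := aSeq_mono h
    omega
  · have hd := aSeq_dvd' h
    have h3 : (nSeq L p : ℤ) ∣ (d - aSeq k) + aSeq (sSeq L p) := by
      have := dvd_sub h1 hd
      exact dvd_of_eq_rhs this (by ring)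
    have := Int.le_of_dvd (by omega) h3
    omega

lemma far_three (L : ℕ → ℕ) (p q k n : ℕ) (hn : n ∈ ESet L p) (hpq : p < q) (h : nSeq L q ≤ 2 * n) :
    (L q : ℤ) < |(n : ℤ) - aSeq k| := by
  by_contra hc
  push Not at hc
  obtain ⟨j, hj, hd⟩ := reduce L q k
  refine hn.2.2 q hpq ⟨h, j, hj, _, hc, Or.inl ?_⟩
  exact dvd_of_eq_rhs hd (by ring)

lemma far_two (L : ℕ → ℕ) (p q k n m : ℕ) (hn : n ∈ ESet L p) (hm : m ∈ ESet L q)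
    (hnm : n ≤ m) (hne : (p, n) ≠ (q, m)) :
    (L (max p q) : ℤ) < |(m : ℤ) - n - aSeq k| := by
  rcases lt_trichotomy p q with h | h | h
  · rw [max_eq_right h.le]
    by_contra hc
    push Not at hc
    have hN := nSeq_big L q
    have ha := a_s L q
    have hm2 := hm.2.1
    have hm1 : (nSeq L q : ℤ) ∣ m := by exact_mod_cast hm.1
    have hn1 : 1 ≤ n := by
      have := hn.2.1
      have := nSeq_big L p
      omega
    have hc' := abs_le.1 hc
    obtain ⟨j, hj, hd⟩ := reduce L q k
    have key : nSeq L q ≤ 2 * n := by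
      rcases le_total k (sSeq L q) with hk | hk
      · have := aSeq_mono hk
        omega
      · have hd := aSeq_dvd' hk
        have h3 : (nSeq L q : ℤ) ∣ n + ((m : ℤ) - n - aSeq k) + aSeq (sSeq L q) := by
          have := dvd_sub hm1 hd
          exact dvd_of_eq_rhs this (by ring)
        have := Int.le_of_dvd (by omega) h3
        omega
    refine hn.2.2 q h ⟨key, j, hj, -((m : ℤ) - n - aSeq k), by rwa [abs_neg], Or.inr ?_⟩
    have := dvd_sub hm1 hd
    exact dvd_of_eq_rhs this (by ring)
  · subst h
    rw [max_self]
    have hlt : n < m := lt_of_le_of_ne hnm (by rintro rfl; exact hne rfl)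
    have hd : (nSeq L p : ℤ) ∣ (m : ℤ) - n := dvd_sub (by exact_mod_cast hm.1) (by exact_mod_cast hn.1)
    exact far_of_dvd L p k _ hd (Int.le_of_dvd (by omega) hd)
  · rw [max_eq_left h.le]
    by_contra hc
    push Not at hc
    have hN := nSeq_big L p
    have hn2 := hn.2.1
    have hn1 : (nSeq L p : ℤ) ∣ n := by exact_mod_cast hn.1
    have hc' := abs_le.1 hc
    obtain ⟨j, hj, hd⟩ := reduce L p k
    refine hm.2.2 p h ⟨by omega, j, hj, _, hc, Or.inl ?_⟩
    have := dvd_add hn1 hd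
    exact dvd_of_eq_rhs this (by ring)

lemma far_self (L : ℕ → ℕ) (p k n : ℕ) (hn : n ∈ ESet L p) : (L p : ℤ) < |(n : ℤ) - aSeq k| :=
  far_of_dvd L p k n (by exact_mod_cast hn.1) (by exact_mod_cast hn.2.1)

lemma card_modEq_le (N r : ℕ) (c : ℤ) :
    ((Finset.range (N + 1)).filter (fun n : ℕ => (r : ℤ) ∣ (n : ℤ) - c)).card ≤ N / r + 1 := by
  rw [← Finset.card_range (N / r + 1)]
  refine Finset.card_le_card_of_injOn (fun n => n / r) ?_ ?_
  · intro n hn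
    simp only [Finset.coe_filter, Finset.mem_range, Set.mem_ofPred_eq] at hn
    simp only [Finset.coe_range, Set.mem_Iio]
    exact Nat.lt_succ_of_le (Nat.div_le_div_right (by omega))
  · intro n hn m hm h
    simp only [Finset.coe_filter, Finset.mem_range, Set.mem_ofPred_eq] at hn hm
    have h1 : (r : ℤ) ∣ (n : ℤ) - m := dvd_of_eq_rhs (dvd_sub hn.2 hm.2) (by ring)
    have h2 : m ≡ n [MOD r] := (Nat.modEq_iff_dvd).2 h1
    have h3 : m % r = n % r := h2
    have h4 : n / r = m / r := h
    rw [← Nat.div_add_mod n r, ← Nat.div_add_mod m r, h3, h4]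

lemma card_RSet_le (L : ℕ → ℕ) (q N : ℕ) :
    ((Finset.range (N + 1)).filter (fun n => n ∈ RSet L q)).card ≤
      2 * (sSeq L q + 1) * (2 * L q + 1) * (N / nSeq L q + 1) := by
  have hsub : (Finset.range (N + 1)).filter (fun n => n ∈ RSet L q) ⊆
      ((Finset.range (sSeq L q + 1)) ×ˢ (Finset.Icc (-(L q : ℤ)) (L q))).biUnion
        (fun z => (Finset.range (N + 1)).filter
            (fun n : ℕ => (nSeq L q : ℤ) ∣ (n : ℤ) - (aSeq z.1 + z.2)) ∪
          (Finset.range (N + 1)).filter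
            (fun n : ℕ => (nSeq L q : ℤ) ∣ (n : ℤ) - (-aSeq z.1 + z.2))) := by
    intro n hn
    rw [Finset.mem_filter] at hn
    obtain ⟨hn1, hn2, j, hj, u, hu, hor⟩ := hn
    rw [Finset.mem_biUnion]
    refine ⟨(j, u), ?_, ?_⟩
    · rw [Finset.mem_product, Finset.mem_range, Finset.mem_Icc]
      exact ⟨Nat.lt_succ_of_le hj, abs_le.1 hu⟩
    · rw [Finset.mem_union, Finset.mem_filter, Finset.mem_filter]
      exact hor.imp (fun h => ⟨hn1, h⟩) (fun h => ⟨hn1, h⟩)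
  refine (Finset.card_le_card hsub).trans ((Finset.card_biUnion_le_card_mul _ _
    (2 * (N / nSeq L q + 1)) ?_).trans ?_)
  · intro z _
    refine (Finset.card_union_le _ _).trans ?_
    have h1 := card_modEq_le N (nSeq L q) (aSeq z.1 + z.2)
    have h2 := card_modEq_le N (nSeq L q) (-aSeq z.1 + z.2)
    omega
  · rw [Finset.card_product, Finset.card_range, Int.card_Icc]
    have : ((L q : ℤ) + 1 - -(L q : ℤ)).toNat = 2 * L q + 1 := by omega
    rw [this]
    apply le_of_eq; ring

lemma card_RSet_le' (L : ℕ → ℕ) (p q N : ℕ) (h : p < q) :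
    ((Finset.range (N + 1)).filter (fun n => n ∈ RSet L q)).card * (4 * 2 ^ q * nSeq L p) ≤ N := by
  by_cases hN : nSeq L q ≤ 2 * N
  · obtain ⟨r, rfl⟩ : ∃ r, q = r + 1 := ⟨q - 1, by omega⟩
    have h1 := card_RSet_le L (r + 1) N
    have h2 := nSeq_gap L r
    have h3 : nSeq L p ≤ nSeq L r := nSeq_mono L (by omega)
    have h4 : nSeq L (r + 1) * (N / nSeq L (r + 1)) ≤ N := Nat.mul_div_le _ _
    set x := ((Finset.range (N + 1)).filter (fun n => n ∈ RSet L (r + 1))).card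
    set y := N / nSeq L (r + 1) + 1 with hy
    have : 3 * (x * (4 * 2 ^ (r + 1) * nSeq L p)) ≤ 3 * N := by
      calc 3 * (x * (4 * 2 ^ (r + 1) * nSeq L p))
          ≤ 3 * ((2 * (sSeq L (r + 1) + 1) * (2 * L (r + 1) + 1) * y) *
              (4 * 2 ^ (r + 1) * nSeq L r)) := by gcongr
        _ = (24 * 2 ^ (r + 1) * nSeq L r * (2 * L (r + 1) + 1) * (sSeq L (r + 1) + 1)) * y := by ring
        _ ≤ nSeq L (r + 1) * y := by gcongr
        _ = nSeq L (r + 1) * (N / nSeq L (r + 1)) + nSeq L (r + 1) := by rw [hy]; ring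
        _ ≤ 3 * N := by omega
    omega
  · have : (Finset.range (N + 1)).filter (fun n => n ∈ RSet L q) = ∅ := by
      rw [Finset.filter_eq_empty_iff]
      intro n hn hR
      have := hR.1
      rw [Finset.mem_range] at hn
      omega
    rw [this]; simp

lemma card_ESet (L : ℕ → ℕ) (p N : ℕ) :
    N / nSeq L p ≤ ((Finset.range (N + 1)).filter (fun n => n ∈ ESet L p)).card +
      ∑ q ∈ Finset.Ioc p (2 * N),
        ((Finset.range (N + 1)).filter (fun n => n ∈ RSet L q)).card := by
  have hpos : 0 < nSeq L p := by have := nSeq_big L p; omega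
  have hM : ((Finset.range (N / nSeq L p)).image (fun i => nSeq L p * (i + 1))).card
      = N / nSeq L p := by
    rw [Finset.card_image_of_injective, Finset.card_range]
    intro i j hij
    have := Nat.eq_of_mul_eq_mul_left hpos hij
    omega
  rw [← hM]
  refine (Finset.card_le_card (t := ((Finset.range (N + 1)).filter (fun n => n ∈ ESet L p)) ∪
    (Finset.Ioc p (2 * N)).biUnion
      (fun q => (Finset.range (N + 1)).filter (fun n => n ∈ RSet L q))) ?_).trans
    ((Finset.card_union_le _ _).trans (Nat.add_le_add_left Finset.card_biUnion_le _))
  intro n hn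
  rw [Finset.mem_image] at hn
  obtain ⟨i, hi, rfl⟩ := hn
  rw [Finset.mem_range] at hi
  have hle : nSeq L p * (i + 1) ≤ N :=
    (Nat.mul_le_mul_left _ hi).trans (Nat.mul_div_le _ _)
  have hr : nSeq L p * (i + 1) ∈ Finset.range (N + 1) := by rw [Finset.mem_range]; omega
  rw [Finset.mem_union, Finset.mem_filter, Finset.mem_biUnion]
  by_cases h : ∃ q, p < q ∧ nSeq L p * (i + 1) ∈ RSet L q
  · right
    obtain ⟨q, hq, hR⟩ := h
    refine ⟨q, ?_, Finset.mem_filter.2 ⟨hr, hR⟩⟩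
    rw [Finset.mem_Ioc]
    refine ⟨hq, ?_⟩
    have h1 := hR.1
    have h2 := (sSeq_strictMono L).le_apply (x := q)
    have h3 := sSeq_le_nSeq L q
    omega
  · left
    push Not at h
    exact ⟨hr, dvd_mul_right _ _, Nat.le_mul_of_pos_right _ (by omega), h⟩

lemma density_ESet (L : ℕ → ℕ) (p : ℕ) : ∃ c : ℝ, 0 < c ∧ ∀ᶠ N : ℕ in atTop,
    c ≤ (((Finset.range (N + 1)).filter (fun n => n ∈ ESet L p)).card : ℝ) / ((N : ℝ) + 1) := by
  have hpos : 0 < nSeq L p := by have := nSeq_big L p; omega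
  have hpos' : (0 : ℝ) < nSeq L p := by exact_mod_cast hpos
  refine ⟨1 / (2 * nSeq L p), by positivity, ?_⟩
  filter_upwards [eventually_ge_atTop (4 * nSeq L p + 2)] with N hN
  have hN' : (4 * nSeq L p + 2 : ℝ) ≤ N := by exact_mod_cast hN
  have h1 : ((N / nSeq L p : ℕ) : ℝ) ≤ _ := Nat.cast_le.2 (card_ESet L p N)
  rw [Nat.cast_add, Nat.cast_sum] at h1
  have h2 : ∑ q ∈ Finset.Ioc p (2 * N),
        (((Finset.range (N + 1)).filter (fun n => n ∈ RSet L q)).card : ℝ) ≤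
        N / (4 * nSeq L p) := by
    have h3 : ∀ q ∈ Finset.Ioc p (2 * N),
        (((Finset.range (N + 1)).filter (fun n => n ∈ RSet L q)).card : ℝ) ≤
        N / (4 * nSeq L p) * (1 / 2) * (1 / 2) ^ (q - 1) := by
      intro q hq
      rw [Finset.mem_Ioc] at hq
      have h4 := card_RSet_le' L p q N hq.1
      have h5 : (((Finset.range (N + 1)).filter (fun n => n ∈ RSet L q)).card : ℝ) *
        (4 * 2 ^ q * nSeq L p) ≤ N := by exact_mod_cast h4
      obtain ⟨r, rfl⟩ : ∃ r, q = r + 1 := ⟨q - 1, by omega⟩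
      rw [← le_div_iff₀ (by positivity)] at h5
      refine h5.trans (le_of_eq ?_)
      rw [Nat.add_sub_cancel, pow_succ, one_div_pow]
      field_simp
    refine (Finset.sum_le_sum h3).trans ?_
    rw [← Finset.mul_sum]
    have h6 : ∑ q ∈ Finset.Ioc p (2 * N), (1 / 2 : ℝ) ^ (q - 1) ≤ 2 := by
      have h7 : ∑ q ∈ Finset.Ioc p (2 * N), (1 / 2 : ℝ) ^ (q - 1) ≤
          ∑ q ∈ Finset.Ioc 0 (2 * N), (1 / 2 : ℝ) ^ (q - 1) :=
        Finset.sum_le_sum_of_subset_of_nonneg (Finset.Ioc_subset_Ioc_left (Nat.zero_le _))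
          (fun _ _ _ => by positivity)
      refine h7.trans ?_
      have h8 : ∑ q ∈ Finset.Ioc 0 (2 * N), (1 / 2 : ℝ) ^ (q - 1) =
          ∑ q ∈ Finset.range (2 * N), (1 / 2 : ℝ) ^ q := by
        symm
        refine Finset.sum_nbij (fun i => i + 1) ?_ ?_ ?_ ?_
        · intro i hi; simp at hi ⊢; omega
        · intro i _ j _ h; simpa using h
        · intro i hi; simp at hi ⊢; exact ⟨i - 1, by omega, by omega⟩
        · intro i _; simp
      rw [h8]
      exact sum_geometric_two_le _
    calc (N / (4 * nSeq L p) * (1 / 2) : ℝ) * _ ≤ (N / (4 * nSeq L p) * (1 / 2) : ℝ) * 2 := by gcongr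
      _ = _ := by ring
  have h9 : (N : ℝ) / nSeq L p < ((N / nSeq L p : ℕ) : ℝ) + 1 := by
    rw [div_lt_iff₀ hpos']
    have := Nat.lt_div_mul_add (a := N) hpos
    have h10 : N < (N / nSeq L p + 1) * nSeq L p := by rw [add_mul, one_mul]; exact this
    exact_mod_cast h10
  rw [le_div_iff₀ (by positivity)]
  have h11 : (1 / (2 * nSeq L p) : ℝ) * (N + 1) ≤ N / nSeq L p - 1 - N / (4 * nSeq L p) := by
    have : (N / nSeq L p - 1 - N / (4 * nSeq L p) : ℝ) - (1 / (2 * nSeq L p) : ℝ) * (N + 1) =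
      (N - (4 * nSeq L p + 2)) / (4 * nSeq L p) := by field_simp; ring
    have h12 : (0 : ℝ) ≤ (N - (4 * nSeq L p + 2)) / (4 * nSeq L p) :=
      div_nonneg (by linarith) (by positivity)
    linarith
  linarith

lemma lowerDensity_pos {A E : Set ℕ} (h : E ⊆ A) {c : ℝ} (hc : 0 < c)
    (hE : ∀ᶠ N : ℕ in atTop,
      c ≤ (((Finset.range (N + 1)).filter (fun n => n ∈ E)).card : ℝ) / ((N : ℝ) + 1)) :
    0 < lowerDensity A := by
  refine hc.trans_le ?_
  unfold lowerDensity
  refine le_liminf_of_le ?_ ?_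
  · refine IsBoundedUnder.isCoboundedUnder_ge ⟨1, ?_⟩
    rw [eventually_map]
    refine Eventually.of_forall fun N => ?_
    change (((Finset.range (N + 1)).filter (fun n => n ∈ A)).card : ℝ) / ((N : ℝ) + 1) ≤ 1
    rw [div_le_one (by positivity)]
    have := Finset.card_filter_le (Finset.range (N + 1)) (fun n => n ∈ A)
    rw [Finset.card_range] at this
    exact_mod_cast this
  · filter_upwards [hE] with N hN
    refine hN.trans ?_
    gcongr

section Operator

variable {𝕜 : Type*} [RCLike 𝕜]

lemma c0_tendsto (f : C₀(ℕ, 𝕜)) : Tendsto f atTop (𝓝 0) := by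
  have := zero_at_infty f
  rwa [cocompact_eq_atTop] at this

/-- Element of `c₀` from a null sequence. -/
def mkC0 (f : ℕ → 𝕜) (h : Tendsto f atTop (𝓝 0)) : C₀(ℕ, 𝕜) where
  toFun := f
  continuous_toFun := continuous_of_discreteTopology
  zero_at_infty' := by rw [cocompact_eq_atTop]; exact h

lemma mkC0_apply (f : ℕ → 𝕜) (h : Tendsto f atTop (𝓝 0)) (n : ℕ) : mkC0 f h n = f n := rfl

lemma c0_apply_le (f : C₀(ℕ, 𝕜)) (i : ℕ) : ‖f i‖ ≤ ‖f‖ := by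
  rw [← ZeroAtInftyContinuousMap.norm_toBCF_eq_norm]
  exact f.toBCF.norm_coe_le_norm i

lemma c0_norm_le (f : C₀(ℕ, 𝕜)) {C : ℝ} (hC : 0 ≤ C) (h : ∀ i, ‖f i‖ ≤ C) : ‖f‖ ≤ C := by
  rw [← ZeroAtInftyContinuousMap.norm_toBCF_eq_norm]
  exact (BoundedContinuousFunction.norm_le hC).2 h

/-- The weights. -/
noncomputable def wSeq (𝕜 : Type*) [RCLike 𝕜] (n : ℕ) : 𝕜 := 2 ^ eSeq n / 2 ^ eSeq (n - 1)

lemma wSeq_ne (n : ℕ) : wSeq 𝕜 n ≠ 0 :=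
  div_ne_zero (pow_ne_zero _ two_ne_zero) (pow_ne_zero _ two_ne_zero)

lemma eSeq_pred (n : ℕ) : eSeq n ≤ eSeq (n - 1) + 1 := by
  cases n with
  | zero => simp [eSeq]
  | succ n => exact eSeq_succ_le n

lemma wSeq_le (n : ℕ) : ‖wSeq 𝕜 n‖ ≤ 2 := by
  rw [wSeq, norm_div, norm_pow, norm_pow, RCLike.norm_ofNat, div_le_iff₀ (by positivity),
    ← pow_succ']
  exact pow_le_pow_right₀ (by norm_num) (eSeq_pred n)

/-- The weighted shift. -/
noncomputable def shiftOp (𝕜 : Type*) [RCLike 𝕜] : C₀(ℕ, 𝕜) →L[𝕜] C₀(ℕ, 𝕜) :=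
  LinearMap.mkContinuous
    { toFun := fun x => mkC0 (fun n => wSeq 𝕜 (n + 1) * x (n + 1)) (by
        have h := (tendsto_add_atTop_iff_nat 1).2 (c0_tendsto x)
        have h2 := h.norm.const_mul 2
        rw [norm_zero, mul_zero] at h2
        refine squeeze_zero_norm (fun n => ?_) h2
        rw [norm_mul]
        gcongr
        exact wSeq_le _)
      map_add' := fun x y => by
        ext n
        simp [mkC0_apply, mul_add]
      map_smul' := fun c x => by
        ext n
        simp [mkC0_apply]
        ring } 2 (fun x => by
      refine c0_norm_le _ (by positivity) fun i => ?_
      simp only [LinearMap.coe_mk, AddHom.coe_mk, mkC0_apply]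
      rw [norm_mul]
      gcongr
      · exact wSeq_le _
      · exact c0_apply_le _ _)

lemma shiftOp_apply (x : C₀(ℕ, 𝕜)) (n : ℕ) :
    shiftOp 𝕜 x n = wSeq 𝕜 (n + 1) * x (n + 1) := rfl

lemma shiftOp_iter (n : ℕ) : ∀ (x : C₀(ℕ, 𝕜)) (j : ℕ),
    2 ^ eSeq j * ((⇑(shiftOp 𝕜))^[n] x j) = 2 ^ eSeq (n + j) * x (n + j) := by
  induction n with
  | zero => intro x j; simp
  | succ n ih =>
    intro x j
    rw [Function.iterate_succ_apply, ih, shiftOp_apply, wSeq]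
    have h : n + 1 + j = n + j + 1 := by ring
    have h2 : (2 : 𝕜) ^ eSeq (n + j) ≠ 0 := pow_ne_zero _ two_ne_zero
    rw [h, Nat.add_sub_cancel]
    field_simp

lemma exists_dense_seq (𝕜 : Type*) [RCLike 𝕜] : ∃ (y : ℕ → ℕ → 𝕜) (d : ℕ → ℕ),
    (∀ p t, d p ≤ t → y p t = 0) ∧ (∀ p t, ‖y p t‖ ≤ 2 ^ d p) ∧
    ∀ (z : C₀(ℕ, 𝕜)) (ε : ℝ), 0 < ε → ∀ P, ∃ p, P ≤ p ∧ ∀ t, ‖y p t - z t‖ < ε := by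
  let l : ℕ → List ℕ := fun p => (Encodable.decode (α := List ℕ) p.unpair.2).getD []
  let D := TopologicalSpace.denseSeq 𝕜
  let y : ℕ → ℕ → 𝕜 := fun p t => ((l p).map D).getD t 0
  have hd : ∀ p, ∃ d : ℕ, (∀ t, d ≤ t → y p t = 0) ∧ ∀ t, ‖y p t‖ ≤ 2 ^ d := by
    intro p
    have h0 : ∀ t, (l p).length ≤ t → y p t = 0 := fun t ht =>
      List.getD_eq_default _ _ (by simpa using ht)
    obtain ⟨C, hC⟩ : ∃ C : ℕ, ∑ t ∈ Finset.range (l p).length, ‖y p t‖ ≤ C := exists_nat_ge _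
    refine ⟨max (l p).length C, fun t ht => h0 t ((le_max_left _ _).trans ht), fun t => ?_⟩
    rcases lt_or_ge t (l p).length with h | h
    · calc ‖y p t‖ ≤ ∑ t ∈ Finset.range (l p).length, ‖y p t‖ :=
            Finset.single_le_sum (f := fun t => ‖y p t‖) (fun _ _ => norm_nonneg _)
              (Finset.mem_range.2 h)
        _ ≤ C := hC
        _ ≤ (2 : ℝ) ^ C := by exact_mod_cast Nat.lt_two_pow_self.le
        _ ≤ _ := pow_le_pow_right₀ (by norm_num) (le_max_right _ _)
    · rw [h0 t h, norm_zero]; positivity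
  choose d hd1 hd2 using hd
  refine ⟨y, d, hd1, hd2, fun z ε hε P => ?_⟩
  have hz := c0_tendsto z
  rw [Metric.tendsto_atTop] at hz
  obtain ⟨T, hT⟩ := hz ε hε
  have hi : ∀ t, ∃ i, dist (z t) (D i) < ε := fun t =>
    (TopologicalSpace.denseRange_denseSeq 𝕜).exists_dist_lt (z t) hε
  choose idx hidx using hi
  refine ⟨Nat.pair P (Encodable.encode ((List.range T).map idx)), Nat.left_le_pair _ _, fun t => ?_⟩
  have hl : l (Nat.pair P (Encodable.encode ((List.range T).map idx))) = (List.range T).map idx := by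
    simp only [l, Nat.unpair_pair, Encodable.encodek, Option.getD_some]
  simp only [y, hl]
  rcases lt_or_ge t T with h | h
  · have : (((List.range T).map idx).map D).getD t 0 = D (idx t) := by
      simp [List.getD, h]
    rw [this, ← dist_eq_norm, dist_comm]
    exact hidx t
  · rw [List.getD_eq_default _ _ (by simpa using h), ← dist_eq_norm, dist_comm]
    exact hT t h

lemma value_bound (y : ℕ → 𝕜) (d K i t : ℕ) (hy : ‖y t‖ ≤ 2 ^ d) (ht : t < d)
    (he : 2 * d + K ≤ eSeq i) :
    ‖(2 : 𝕜) ^ eSeq t / 2 ^ eSeq i * y t‖ ≤ (1 / 2) ^ K := by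
  rw [norm_mul, norm_div, norm_pow, norm_pow, RCLike.norm_ofNat]
  have h1 : (2 : ℝ) ^ eSeq t ≤ 2 ^ d :=
    pow_le_pow_right₀ (by norm_num) ((eSeq_le t).trans ht.le)
  have h2 : (2 : ℝ) ^ (2 * d + K) ≤ 2 ^ eSeq i := pow_le_pow_right₀ (by norm_num) he
  calc (2 : ℝ) ^ eSeq t / 2 ^ eSeq i * ‖y t‖ ≤ 2 ^ d / 2 ^ (2 * d + K) * 2 ^ d := by gcongr
    _ = (1 / 2) ^ K := by
      rw [pow_add, two_mul, pow_add, one_div_pow]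
      field_simp

lemma eSeq_shift {n d M t i : ℕ} (h : ∀ k, (M : ℤ) < |(n : ℤ) - aSeq k|) (ht : t < d)
    (hi : i = n + t) : M - d ≤ eSeq i := by
  rcases le_total M d with hM | hM
  · omega
  refine le_of_lt (eSeq_lt_of_far fun k => ?_)
  have := h k
  subst hi
  rw [lt_abs] at this ⊢
  omega

lemma frequently_hc (𝕜 : Type*) [RCLike 𝕜] :
    ∃ x : C₀(ℕ, 𝕜), ∀ U : Set C₀(ℕ, 𝕜), IsOpen U → U.Nonempty →
        0 < lowerDensity {n : ℕ | (⇑(shiftOp 𝕜))^[n] x ∈ U} := by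
  obtain ⟨y, d, hy0, hyb, hyd⟩ := exists_dense_seq 𝕜
  let L : ℕ → ℕ := fun r => ∑ i ∈ Finset.range (r + 1), 3 * d i + r
  have hL : ∀ q r, q ≤ r → 3 * d q + r ≤ L r := by
    intro q r h
    have : 3 * d q ≤ ∑ i ∈ Finset.range (r + 1), 3 * d i :=
      Finset.single_le_sum (f := fun i => 3 * d i) (fun _ _ => Nat.zero_le _)
        (Finset.mem_range.2 (Nat.lt_succ_of_le h))
    simp only [L]; omega
  have huniq : ∀ p n q m : ℕ, n ∈ ESet L p → m ∈ ESet L q → n ≤ m → m < n + d p →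
      (p, n) = (q, m) := by
    intro p n q m hn hm h1 h2
    by_contra hne
    have h3 := far_two L p q 0 n m hn hm h1 hne
    have h4 := hL p (max p q) (le_max_left _ _)
    have h5 : aSeq 0 = 0 := rfl
    rw [h5, lt_abs] at h3
    omega
  let Q : ℕ → ℕ × ℕ → Prop := fun i z => z.2 ∈ ESet L z.1 ∧ z.2 ≤ i ∧ i < z.2 + d z.1
  have hQ : ∀ i z z', Q i z → Q i z' → z = z' := by
    rintro i ⟨p, n⟩ ⟨q, m⟩ ⟨h1, h2, h3⟩ ⟨h4, h5, h6⟩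
    simp only at h1 h2 h3 h4 h5 h6
    rcases le_total n m with h | h
    · exact huniq _ _ _ _ h1 h4 h (by omega)
    · exact (huniq _ _ _ _ h4 h1 h (by omega)).symm
  let f : ℕ → 𝕜 := fun i => if h : ∃ z, Q i z then
    2 ^ eSeq (i - h.choose.2) / 2 ^ eSeq i * y h.choose.1 (i - h.choose.2) else 0
  have hf1 : ∀ p n t, n ∈ ESet L p → t < d p →
      f (n + t) = 2 ^ eSeq t / 2 ^ eSeq (n + t) * y p t := by
    intro p n t hn ht
    have h : ∃ z, Q (n + t) z := ⟨(p, n), hn, by simp, by simpa using ht⟩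
    have hz : h.choose = (p, n) := hQ _ _ _ h.choose_spec ⟨hn, by simp, by simpa using ht⟩
    simp only [f]
    rw [dif_pos h, hz]
    simp
  have hf0 : ∀ i, f i ≠ 0 → ∃ p n t, n ∈ ESet L p ∧ t < d p ∧ i = n + t := by
    intro i hi
    by_cases h : ∃ z, Q i z
    · obtain ⟨⟨p, n⟩, h1, h2, h3⟩ := h
      simp only at h1 h2 h3
      exact ⟨p, n, i - n, h1, by omega, by omega⟩
    · exact absurd (dif_neg h) hi
  have hf : Tendsto f atTop (𝓝 0) := by
    have key : ∀ K : ℕ, ∀ᶠ i in atTop, ‖f i‖ ≤ (1 / 2) ^ K := by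
      intro K
      have h1 : ∀ q ∈ Finset.range K, ∀ᶠ i : ℕ in atTop, ∀ n t, n ∈ ESet L q → t < d q →
          i = n + t → ‖f i‖ ≤ (1 / 2) ^ K := by
        intro q _
        set r := q + 1 + 3 * d q + K with hr
        filter_upwards [eventually_ge_atTop (nSeq L r + d q)] with i hi n t hn ht hit
        have h2 : ∀ k, (L r : ℤ) < |(n : ℤ) - aSeq k| := fun k =>
          far_three L q r k n hn (by omega) (by omega)
        have h3 := eSeq_shift h2 ht hit
        have h4 := hL q r (by omega)
        rw [hit, hf1 q n t hn ht, ← hit]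
        exact value_bound _ (d q) K i t (hyb q t) ht (by omega)
      rw [← Filter.eventually_all_finset] at h1
      filter_upwards [h1] with i hi
      by_cases h0 : f i = 0
      · rw [h0, norm_zero]; positivity
      obtain ⟨q, n, t, hn, ht, hit⟩ := hf0 i h0
      by_cases hq : q < K
      · exact hi q (Finset.mem_range.2 hq) n t hn ht hit
      · have h3 := eSeq_shift (fun k => far_self L q k n hn) ht hit
        have h4 := hL q q le_rfl
        rw [hit, hf1 q n t hn ht, ← hit]
        exact value_bound _ (d q) K i t (hyb q t) ht (by omega)
    rw [Metric.tendsto_atTop']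
    intro ε hε
    obtain ⟨K, hK⟩ := exists_pow_lt_of_lt_one hε (by norm_num : (1 / 2 : ℝ) < 1)
    obtain ⟨N, hN⟩ := eventually_atTop.1 (key K)
    refine ⟨N, fun i hi => ?_⟩
    rw [dist_zero_right]
    exact (hN i hi.le).trans_lt hK
  refine ⟨mkC0 f hf, fun U hU ⟨z, hz⟩ => ?_⟩
  obtain ⟨ε, hε, hball⟩ := Metric.isOpen_iff.1 hU z hz
  obtain ⟨P, hP⟩ := exists_pow_lt_of_lt_one (by positivity : 0 < ε / 3)
    (by norm_num : (1 / 2 : ℝ) < 1)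
  obtain ⟨p, hpP, hp⟩ := hyd z (ε / 3) (by positivity) P
  obtain ⟨c, hc, hE⟩ := density_ESet L p
  refine lowerDensity_pos (E := ESet L p) ?_ hc hE
  intro n hn
  refine hball ?_
  rw [Metric.mem_ball, dist_eq_norm]
  have hpow : (1 / 2 : ℝ) ^ p ≤ (1 / 2) ^ P :=
    pow_le_pow_of_le_one (by norm_num) (by norm_num) hpP
  have hmain : ∀ j, ‖(⇑(shiftOp 𝕜))^[n] (mkC0 f hf) j - y p j‖ ≤ (1 / 2) ^ p := by
    intro j
    have hj0 : (2 : 𝕜) ^ eSeq j ≠ 0 := pow_ne_zero _ two_ne_zero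
    have hnj0 : (2 : 𝕜) ^ eSeq (n + j) ≠ 0 := pow_ne_zero _ two_ne_zero
    have hit : (⇑(shiftOp 𝕜))^[n] (mkC0 f hf) j = 2 ^ eSeq (n + j) * f (n + j) / 2 ^ eSeq j := by
      rw [eq_div_iff hj0, mul_comm, shiftOp_iter, mkC0_apply]
    rw [hit]
    rcases lt_or_ge j (d p) with hj | hj
    · rw [hf1 p n j hn hj]
      have : (2 : 𝕜) ^ eSeq (n + j) * (2 ^ eSeq j / 2 ^ eSeq (n + j) * y p j) / 2 ^ eSeq j - y p j
          = 0 := by field_simp; simp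
      rw [this, norm_zero]; positivity
    · rw [hy0 p j hj, sub_zero]
      by_cases h0 : f (n + j) = 0
      · rw [h0]; simp
      obtain ⟨q, m, t, hm, ht, hmt⟩ := hf0 _ h0
      have hne : (p, n) ≠ (q, m) := by
        intro h
        rw [Prod.mk.injEq] at h
        obtain ⟨rfl, rfl⟩ := h
        omega
      rcases le_total n m with hnm | hnm
      · have h2 : ∀ k, (L (max p q) : ℤ) < |((m - n : ℕ) : ℤ) - aSeq k| := by
          intro k
          have := far_two L p q k n m hn hm hnm hne
          rwa [Nat.cast_sub hnm]
        have h3 := eSeq_shift (i := j) h2 ht (by omega)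
        have h4 := hL q (max p q) (le_max_right _ _)
        have h5 : p ≤ max p q := le_max_left _ _
        have h6 : (2 : 𝕜) ^ eSeq (n + j) * f (n + j) / 2 ^ eSeq j =
            2 ^ eSeq t / 2 ^ eSeq j * y q t := by
          rw [hmt] at hnj0 ⊢
          rw [hf1 q m t hm ht]
          field_simp
        rw [h6]
        exact value_bound _ (d q) p j t (hyb q t) ht (by omega)
      · exact absurd (huniq q m p n hm hn hnm (by omega)).symm hne
  have : ‖(⇑(shiftOp 𝕜))^[n] (mkC0 f hf) - z‖ ≤ ε / 3 + ε / 3 := by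
    refine c0_norm_le _ (by positivity) fun j => ?_
    rw [ZeroAtInftyContinuousMap.sub_apply,
      ← sub_add_sub_cancel _ (y p j) _]
    refine (norm_add_le _ _).trans (add_le_add ?_ (hp j).le)
    exact ((hmain j).trans hpow).trans hP.le
  linarith

lemma not_dense_periodic (𝕜 : Type*) [RCLike 𝕜] :
    ¬ Dense {x : C₀(ℕ, 𝕜) | ∃ n : ℕ, 0 < n ∧ (⇑(shiftOp 𝕜))^[n] x = x} := by
  intro hD
  let e0 : C₀(ℕ, 𝕜) := mkC0 (fun n => if n = 0 then 1 else 0) (by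
    refine tendsto_const_nhds.congr' ?_
    filter_upwards [eventually_gt_atTop 0] with n hn
    rw [if_neg (by omega)])
  obtain ⟨x, ⟨n, hn, hx⟩, hd⟩ := hD.exists_dist_lt e0 (ε := 1) one_pos
  have hx0 : x 0 ≠ 0 := by
    intro h
    rw [dist_eq_norm] at hd
    have h1 := c0_apply_le (e0 - x) 0
    rw [ZeroAtInftyContinuousMap.sub_apply, h] at h1
    have h2 : e0 0 = 1 := rfl
    rw [h2, sub_zero, norm_one] at h1
    linarith
  have hper : ∀ j, (⇑(shiftOp 𝕜))^[n * j] x = x := by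
    intro j
    rw [Function.iterate_mul]
    exact Function.iterate_fixed hx j
  have hval : ∀ j, x 0 = 2 ^ eSeq (n * j) * x (n * j) := by
    intro j
    have h := shiftOp_iter (n * j) x 0
    rw [hper] at h
    simpa [eSeq] using h
  have ht := c0_tendsto x
  rw [Metric.tendsto_atTop] at ht
  obtain ⟨T, hT⟩ := ht (‖x 0‖ / 2 ^ n) (by have := norm_pos_iff.2 hx0; positivity)
  let j := aSeq T / n + 1
  have h1 : n * j = n * (aSeq T / n) + n := by simp only [j]; ring
  have h2 := Nat.div_add_mod (aSeq T) n
  have h3 := Nat.mod_lt (aSeq T) hn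
  obtain ⟨i, hi⟩ := Nat.exists_eq_add_of_le (show aSeq T ≤ n * j by omega)
  have h4 : eSeq (n * j) ≤ n := by
    rw [hi]
    exact (eSeq_aSeq_add T i).trans (by omega)
  have h5 := hT (n * j) (by have := aSeq_ge T; omega)
  rw [dist_zero_right, lt_div_iff₀ (by positivity)] at h5
  have h6 := congrArg norm (hval j)
  rw [norm_mul, norm_pow, RCLike.norm_ofNat] at h6
  have h7 : (2 : ℝ) ^ eSeq (n * j) ≤ 2 ^ n := pow_le_pow_right₀ (by norm_num) h4
  have h8 := mul_le_mul_of_nonneg_right h7 (norm_nonneg (x (n * j)))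
  linarith

end Operator

/-- There exists a bounded sequence `w` of nonzero scalars such that the weighted backward
shift `B_w` on `c₀` (the continuous linear operator `Bw` with `(Bw x) n = w (n+1) * x (n+1)`)
is frequently hypercyclic but not chaotic (chaotic = hypercyclic with a dense set of
periodic points). -/
theorem exists_weightedShift_frequentlyHC_not_chaotic {𝕜 : Type*} [RCLike 𝕜] :
    ∃ (w : ℕ → 𝕜) (Bw : C₀(ℕ, 𝕜) →L[𝕜] C₀(ℕ, 𝕜)),
      (∀ n, w n ≠ 0) ∧ (∃ C : ℝ, ∀ n, ‖w n‖ ≤ C) ∧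
      (∀ (x : C₀(ℕ, 𝕜)) (n : ℕ), Bw x n = w (n + 1) * x (n + 1)) ∧
      (∃ x : C₀(ℕ, 𝕜), ∀ U : Set C₀(ℕ, 𝕜), IsOpen U → U.Nonempty →
        0 < lowerDensity {n : ℕ | (⇑Bw)^[n] x ∈ U}) ∧
      ¬ ((∃ x : C₀(ℕ, 𝕜), Dense (Set.range fun n : ℕ => (⇑Bw)^[n] x)) ∧
          Dense {x : C₀(ℕ, 𝕜) | ∃ n : ℕ, 0 < n ∧ (⇑Bw)^[n] x = x}) := by

  exact ⟨wSeq 𝕜, shiftOp 𝕜, wSeq_ne, ⟨2, wSeq_le⟩, shiftOp_apply, frequently_hc 𝕜,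
    fun h => not_dense_periodic 𝕜 h.2⟩
end

section
/- There exists a bounded sequence w = (w_n)_{n≥1} of nonzero scalars such that the weighted backward shift B_w on c₀ is very frequently hypercyclic but not chaotic; moreover, this B_w has no unimodular eigenvalues (no eigenvalue λ with |λ| = 1) and is not topologically mixing. -/
open Filter Topology
open scoped Classical ZeroAtInfty

/-- Auxiliary growing sequence. -/
def vfK (p : ℕ) : ℕ := 27 * (2 * p + 5) * (4 * p + 5) * 2 ^ (p + 1)

/-- Base scale. -/
def vfQ : ℕ → ℕ
  | 0 => 1
  | p + 1 => 8 * vfQ p * vfK p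

/-- Bad positions. -/
def vfb : ℕ → ℕ
  | 0 => 0
  | p + 1 => vfb p + vfQ (p + 1)

lemma vfK_pos (p : ℕ) : 0 < vfK p := by unfold vfK; positivity

lemma vfQ_pos (p : ℕ) : 0 < vfQ p := by
  induction p with
  | zero => simp [vfQ]
  | succ p ih => have := vfK_pos p; simp only [vfQ]; positivity

lemma vfK_ge (p : ℕ) : p + 1 ≤ vfK p := by
  unfold vfK
  have h1 : 1 ≤ 2 ^ (p + 1) := Nat.one_le_two_pow
  have h2 : p + 1 ≤ 27 * (2 * p + 5) * (4 * p + 5) := by nlinarith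
  calc p + 1 = (p + 1) * 1 := by ring
    _ ≤ _ := Nat.mul_le_mul h2 h1

lemma vfQ_ge (p : ℕ) : 8 * p ≤ vfQ p := by
  cases p with
  | zero => simp
  | succ p =>
    simp only [vfQ]
    have := vfK_ge p
    have := vfQ_pos p
    nlinarith [Nat.mul_le_mul this (vfK_ge p)]

lemma vfQ_succ_ge (p : ℕ) : 8 * vfQ p ≤ vfQ (p + 1) := by
  simp only [vfQ]
  exact Nat.le_mul_of_pos_right _ (vfK_pos p)

lemma vfQ_mono : Monotone vfQ :=
  monotone_nat_of_le_succ fun p => by have := vfQ_succ_ge p; omega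

lemma vfb_strictMono : StrictMono vfb :=
  strictMono_nat_of_lt_succ fun p => by have := vfQ_pos (p + 1); simp only [vfb]; omega

lemma vfb_le (p : ℕ) : vfb p ≤ 2 * vfQ p := by
  induction p with
  | zero => simp [vfb]
  | succ p ih => have := vfQ_succ_ge p; simp only [vfb]; omega

lemma vfb_ge (p : ℕ) (hp : 0 < p) : vfQ p ≤ vfb p := by
  cases p with
  | zero => omega
  | succ p => simp [vfb]

/-- congruence of the bad positions -/
lemma vfb_congr (p k : ℕ) (h : p ≤ k) : ∃ l : ℕ, vfb k = vfb p + 8 * vfQ p * l := by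
  have hd : ∀ k, p ≤ k → 8 * vfQ p ∣ vfQ (k + 1) := by
    intro k hk
    induction k, hk using Nat.le_induction with
    | base => exact ⟨vfK p, rfl⟩
    | succ k hk ih =>
      obtain ⟨c, hc⟩ := ih
      exact ⟨c * 8 * vfK (k + 1), by rw [vfQ, hc]; ring⟩
  induction k, h using Nat.le_induction with
  | base => exact ⟨0, by simp⟩
  | succ k hk ih =>
    obtain ⟨l, hl⟩ := ih
    obtain ⟨c, hc⟩ := hd k hk
    exact ⟨l + c, by rw [vfb, hl, hc]; ring⟩

/-- centers of forbidden windows -/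
def vfC (p : ℕ) : Finset ℤ :=
  ((Finset.range (p + 1)).image (fun j => (4 * vfQ p + vfb j : ℤ))) ∪
  ((Finset.range (p + 1)).image (fun j => (4 * vfQ p - vfb j : ℤ))) ∪ {(vfb p : ℤ)}

lemma vfC_card (p : ℕ) : (vfC p).card ≤ 2 * p + 3 := by
  unfold vfC
  refine (Finset.card_union_le _ _).trans ?_
  have h1 := Finset.card_union_le
    ((Finset.range (p + 1)).image (fun j => (4 * vfQ p + vfb j : ℤ)))
    ((Finset.range (p + 1)).image (fun j => (4 * vfQ p - vfb j : ℤ)))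
  have h2 := Finset.card_image_le (s := Finset.range (p + 1))
    (f := fun j => (4 * vfQ p + vfb j : ℤ))
  have h3 := Finset.card_image_le (s := Finset.range (p + 1))
    (f := fun j => (4 * vfQ p - vfb j : ℤ))
  simp only [Finset.card_range, Finset.card_singleton] at *
  omega

lemma vfC_bounds (p : ℕ) (hp : 0 < p) (c : ℤ) (hc : c ∈ vfC p) :
    (vfQ p : ℤ) ≤ c ∧ c ≤ 6 * vfQ p := by
  have hb := vfb_le p
  have hb' := vfb_ge p hp
  simp only [vfC, Finset.mem_union, Finset.mem_image, Finset.mem_range, Finset.mem_singleton] at hc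
  rcases hc with (⟨j, hj, rfl⟩ | ⟨j, hj, rfl⟩) | rfl
  · have := vfb_strictMono.monotone (show j ≤ p by omega); constructor <;> omega
  · have := vfb_strictMono.monotone (show j ≤ p by omega); constructor <;> omega
  · constructor <;> omega

/-- forbidden set -/
def vfD (p : ℕ) : Set ℕ :=
  {n | ∃ c ∈ vfC p, ∃ l : ℤ, |(n : ℤ) - (c + 8 * vfQ p * l)| ≤ 2 * p}

/-- visiting sets -/
def vfE (q : ℕ) : Set ℕ :=
  {n | (∃ l : ℕ, n = 4 * vfQ q + 8 * vfQ q * l) ∧ ∀ p, q < p → n ∉ vfD p}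

lemma vfE_sep1 (p q n m k i : ℕ) (hn : n ∈ vfE p) (hm : m ∈ vfE q) (hmn : m ≤ n)
    (hne : ¬ (p = q ∧ n = m)) (hi : i < p) : n + i < m + vfb k ∨ m + vfb k + p + q ≤ n + i := by
  by_contra! hcon
  obtain ⟨h1, h2⟩ := hcon
  obtain ⟨⟨l, hl⟩, hnD⟩ := hn
  obtain ⟨⟨l', hl'⟩, hmD⟩ := hm
  rcases lt_trichotomy p q with hpq | hpq | hpq
  · apply hnD q hpq
    rcases le_total k q with hk | hk
    · refine ⟨4 * vfQ q + vfb k, ?_, l', ?_⟩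
      · simp only [vfC, Finset.mem_union, Finset.mem_image, Finset.mem_range]
        exact Or.inl (Or.inl ⟨k, by omega, rfl⟩)
      · have : (4 * vfQ q + vfb k + 8 * vfQ q * l' : ℤ) = m + vfb k := by rw [hl']; push_cast; ring
        rw [this, abs_le]; constructor <;> omega
    · obtain ⟨r, hr⟩ := vfb_congr q k hk
      refine ⟨4 * vfQ q + vfb q, ?_, l' + r, ?_⟩
      · simp only [vfC, Finset.mem_union, Finset.mem_image, Finset.mem_range]
        exact Or.inl (Or.inl ⟨q, by omega, rfl⟩)
      · have : (4 * vfQ q + vfb q + 8 * vfQ q * (l' + r) : ℤ) = m + vfb k := by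
          rw [hl', hr]; push_cast; ring
        rw [this, abs_le]; constructor <;> omega
  · subst hpq
    have hlt : m < n := lt_of_le_of_ne hmn (fun h => hne ⟨rfl, h.symm⟩)
    have hll : l' < l := by
      by_contra! h
      have := Nat.mul_le_mul_left (8 * vfQ p) h
      omega
    have hQ := vfQ_ge p
    have hb := vfb_le p
    obtain ⟨d, rfl⟩ : ∃ d, l = l' + 1 + d := ⟨l - (l' + 1), by omega⟩
    have hnm : n = m + 8 * vfQ p * (1 + d) := by rw [hl, hl']; ring
    rcases le_total k p with hk | hk
    · have := vfb_strictMono.monotone hk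
      have : 8 * vfQ p * (1 + d) = 8 * vfQ p + 8 * vfQ p * d := by ring
      have := Nat.zero_le (8 * vfQ p * d)
      omega
    · obtain ⟨r, hr⟩ := vfb_congr p k hk
      have hb' := vfb_ge p (by omega)
      rw [hr, hnm] at h1 h2
      rcases le_or_gt (1 + d) r with h | h
      · have := Nat.mul_le_mul_left (8 * vfQ p) h
        omega
      · have := Nat.mul_le_mul_left (8 * vfQ p) (show r + 1 ≤ 1 + d from h)
        have h3 : 8 * vfQ p * (r + 1) = 8 * vfQ p * r + 8 * vfQ p := by ring
        omega
  · apply hmD p hpq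
    rcases le_total k p with hk | hk
    · refine ⟨4 * vfQ p - vfb k, ?_, l, ?_⟩
      · simp only [vfC, Finset.mem_union, Finset.mem_image, Finset.mem_range]
        exact Or.inl (Or.inr ⟨k, by omega, rfl⟩)
      · have : (4 * vfQ p - vfb k + 8 * vfQ p * l : ℤ) = n - vfb k := by rw [hl]; push_cast; ring
        rw [this, abs_le]; constructor <;> omega
    · obtain ⟨r, hr⟩ := vfb_congr p k hk
      refine ⟨4 * vfQ p - vfb p, ?_, l - r, ?_⟩
      · simp only [vfC, Finset.mem_union, Finset.mem_image, Finset.mem_range]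
        exact Or.inl (Or.inr ⟨p, by omega, rfl⟩)
      · have : (4 * vfQ p - vfb p + 8 * vfQ p * (l - r) : ℤ) = n - vfb k := by
          rw [hl, hr]; push_cast; ring
        rw [this, abs_le]; constructor <;> omega

lemma vfE_sep2 (p n k i : ℕ) (hn : n ∈ vfE p) (hi : i < p) :
    n + i < vfb k ∨ vfb k + k + p ≤ n + i := by
  by_contra! hcon
  obtain ⟨h1, h2⟩ := hcon
  obtain ⟨⟨l, hl⟩, hnD⟩ := hn
  rcases lt_or_ge p k with hk | hk
  · apply hnD k hk
    refine ⟨vfb k, by simp [vfC], 0, ?_⟩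
    rw [abs_le]; constructor <;> omega
  · have := vfb_strictMono.monotone hk
    have hQ := vfQ_ge p
    have hb := vfb_le p
    have := Nat.zero_le (8 * vfQ p * l)
    omega

/-- counting the forbidden sets -/
lemma vfD_count (p N : ℕ) (hp : 0 < p) :
    ((Finset.range N).filter (fun n => n ∈ vfD p)).card * vfQ p ≤
      (2 * p + 3) * (4 * p + 1) * (3 * N) := by
  have hQ := vfQ_ge p
  have hQ0 := vfQ_pos p
  rcases Nat.lt_or_ge (2 * N) (vfQ p) with hN | hN
  · have : (Finset.range N).filter (fun n => n ∈ vfD p) = ∅ := by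
      apply Finset.filter_eq_empty_iff.mpr
      rintro n hn ⟨c, hc, l, hl⟩
      rw [Finset.mem_range] at hn
      obtain ⟨hc1, hc2⟩ := vfC_bounds p hp c hc
      rw [abs_le] at hl
      rcases le_or_gt 0 l with h | h
      · have : (0:ℤ) ≤ 8 * vfQ p * l := by positivity
        omega
      · have : (8 * vfQ p : ℤ) * l ≤ 8 * vfQ p * (-1) :=
          mul_le_mul_of_nonneg_left (by omega) (by positivity)
        omega
    rw [this]; simp
  · have hsub : (Finset.range N).filter (fun n => n ∈ vfD p) ⊆
        ((vfC p ×ˢ Finset.Icc (-(2 * p : ℤ)) (2 * p)) ×ˢ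
          Finset.range (N / (8 * vfQ p) + 1)).image
          (fun z : (ℤ × ℤ) × ℕ => (z.1.1 + 8 * (vfQ p : ℤ) * (z.2 : ℤ) + z.1.2).toNat) := by
      intro n hn
      simp only [Finset.mem_filter, Finset.mem_range] at hn
      obtain ⟨hnN, c, hc, l, hl⟩ := hn
      obtain ⟨hc1, hc2⟩ := vfC_bounds p hp c hc
      rw [abs_le] at hl
      have hl0 : 0 ≤ l := by
        by_contra! h
        have : (8 * vfQ p : ℤ) * l ≤ 8 * vfQ p * (-1) :=
          mul_le_mul_of_nonneg_left (by omega) (by positivity)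
        omega
      lift l to ℕ using hl0
      rw [Finset.mem_image]
      refine ⟨((c, n - (c + 8 * vfQ p * l)), l), ?_, ?_⟩
      · simp only [Finset.mem_product, Finset.mem_Icc, Finset.mem_range]
        refine ⟨⟨hc, by omega, by omega⟩, ?_⟩
        rw [Nat.lt_succ_iff, Nat.le_div_iff_mul_le (by omega)]
        have : (l * (8 * vfQ p) : ℤ) ≤ N := by
          have : (l * (8 * vfQ p) : ℤ) = 8 * vfQ p * l := by ring
          omega
        exact_mod_cast this
      · dsimp only
        have : c + 8 * (vfQ p : ℤ) * l + (n - (c + 8 * vfQ p * l)) = n := by ring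
        rw [this]; simp
    have hcard := (Finset.card_le_card hsub).trans Finset.card_image_le
    rw [Finset.card_product, Finset.card_product, Int.card_Icc, Finset.card_range] at hcard
    have h4 : ((2 * p : ℤ) + 1 - -(2 * p : ℤ)).toNat = 4 * p + 1 := by omega
    rw [h4] at hcard
    have h5 : (N / (8 * vfQ p) + 1) * vfQ p ≤ 3 * N := by
      have := Nat.div_mul_le_self N (8 * vfQ p)
      have h6 : N / (8 * vfQ p) * (8 * vfQ p) = 8 * (N / (8 * vfQ p) * vfQ p) := by ring
      rw [add_mul]
      omega
    calc _ ≤ ((vfC p).card * (4 * p + 1) * (N / (8 * vfQ p) + 1)) * vfQ p :=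
          Nat.mul_le_mul_right _ hcard
      _ = ((vfC p).card * (4 * p + 1)) * ((N / (8 * vfQ p) + 1) * vfQ p) := by ring
      _ ≤ _ := Nat.mul_le_mul (Nat.mul_le_mul_right _ (vfC_card p)) h5

lemma vfD_ge (p n : ℕ) (hp : 0 < p) (hn : n ∈ vfD p) : p ≤ n := by
  have hQ := vfQ_ge p
  obtain ⟨c, hc, l, hl⟩ := hn
  obtain ⟨hc1, hc2⟩ := vfC_bounds p hp c hc
  rw [abs_le] at hl
  rcases le_or_gt 0 l with h | h
  · have : (0:ℤ) ≤ 8 * vfQ p * l := by positivity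
    omega
  · have : (8 * vfQ p : ℤ) * l ≤ 8 * vfQ p * (-1) :=
      mul_le_mul_of_nonneg_left (by omega) (by positivity)
    omega

lemma vfE_next (q m : ℕ) (h : ¬ ∃ n ≤ 8 * vfQ q, m + n ∈ vfE q) :
    ∃ p, q < p ∧ ∃ n ≤ 8 * vfQ q, m + n ∈ vfD p := by
  have hQ0 := vfQ_pos q
  have h1 := Nat.div_mul_le_self (m + 4 * vfQ q) (8 * vfQ q)
  have h2 := Nat.lt_div_mul_add (a := m + 4 * vfQ q) (b := 8 * vfQ q) (by omega)
  set l := (m + 4 * vfQ q) / (8 * vfQ q) with hl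
  have h3 : l * (8 * vfQ q) = 8 * vfQ q * l := by ring
  by_contra! hcon
  refine h ⟨4 * vfQ q + 8 * vfQ q * l - m, by omega, ⟨l, by omega⟩, ?_⟩
  intro p hp
  exact hcon p hp _ (by omega)

lemma vf_count_one (q p N : ℕ) (hqp : q < p) (hN : 8 * vfQ q ≤ N) :
    (((Finset.range (N + 1)).filter (fun m => ∃ n ≤ 8 * vfQ q, m + n ∈ vfD p)).card : ℝ) ≤
      (N + 1) * (1 / 2) ^ p := by
  obtain ⟨r, rfl⟩ : ∃ r, p = r + 1 := ⟨p - 1, by omega⟩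
  have hsub : (Finset.range (N + 1)).filter (fun m => ∃ n ≤ 8 * vfQ q, m + n ∈ vfD (r + 1)) ⊆
      (Finset.range (8 * vfQ q + 1)).biUnion
        (fun n => (Finset.range (N + 1)).filter (fun m => m + n ∈ vfD (r + 1))) := by
    intro m hm
    simp only [Finset.mem_filter, Finset.mem_biUnion, Finset.mem_range] at hm ⊢
    obtain ⟨h1, n, hn, h2⟩ := hm
    exact ⟨n, by omega, h1, h2⟩
  have h1 : ∀ n ∈ Finset.range (8 * vfQ q + 1),
      ((Finset.range (N + 1)).filter (fun m => m + n ∈ vfD (r + 1))).card ≤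
      ((Finset.range (2 * (N + 1))).filter (fun m => m ∈ vfD (r + 1))).card := by
    intro n hn
    rw [Finset.mem_range] at hn
    refine Finset.card_le_card_of_injOn (fun m => m + n) ?_ ?_
    · intro m hm
      simp only [Finset.coe_filter, Finset.mem_range, Set.mem_ofPred_eq] at hm ⊢
      exact ⟨by omega, hm.2⟩
    · intro a _ b _ hab
      simpa using hab
  have h2 := (Finset.card_le_card hsub).trans (Finset.card_biUnion_le_card_mul _ _ _ h1)
  rw [Finset.card_range] at h2
  have h3 := vfD_count (r + 1) (2 * (N + 1)) (by omega)
  set c := ((Finset.range (2 * (N + 1))).filter (fun m => m ∈ vfD (r + 1))).card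
  set d := ((Finset.range (N + 1)).filter
    (fun m => ∃ n ≤ 8 * vfQ q, m + n ∈ vfD (r + 1))).card
  have hq : vfQ q ≤ vfQ r := vfQ_mono (by omega)
  have hq0 := vfQ_pos q
  have h4 : d ≤ 9 * vfQ r * c := h2.trans (Nat.mul_le_mul_right _ (by omega))
  have h5 : (vfQ r * ((2 * r + 5) * (4 * r + 5))) * (d * (216 * 2 ^ (r + 1))) ≤
      (vfQ r * ((2 * r + 5) * (4 * r + 5))) * (54 * (N + 1)) := by
    calc _ = d * vfQ (r + 1) := by simp only [vfQ, vfK]; ring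
      _ ≤ 9 * vfQ r * c * vfQ (r + 1) := Nat.mul_le_mul_right _ h4
      _ = 9 * vfQ r * (c * vfQ (r + 1)) := by ring
      _ ≤ 9 * vfQ r * ((2 * (r + 1) + 3) * (4 * (r + 1) + 1) * (3 * (2 * (N + 1)))) :=
          Nat.mul_le_mul_left _ h3
      _ = _ := by ring
  have h6 := Nat.le_of_mul_le_mul_left h5 (by have := vfQ_pos r; positivity)
  have h7 : d * 2 ^ (r + 1) ≤ N + 1 := by
    have : d * (216 * 2 ^ (r + 1)) = 216 * (d * 2 ^ (r + 1)) := by ring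
    omega
  have h8 : (d : ℝ) * 2 ^ (r + 1) ≤ N + 1 := by exact_mod_cast h7
  rw [one_div, inv_pow, ← div_eq_mul_inv, le_div_iff₀ (by positivity)]
  exact h8

lemma vf_geom (q T : ℕ) : ∑ p ∈ Finset.Ioc q (q + T), ((1 : ℝ) / 2) ^ p ≤ (1 / 2) ^ q := by
  have : ∑ p ∈ Finset.Ioc q (q + T), ((1 : ℝ) / 2) ^ p = (1 / 2) ^ q - (1 / 2) ^ (q + T) := by
    induction T with
    | zero => simp
    | succ T ih =>
      rw [← add_assoc, ← Finset.insert_Ioc_right_eq_Ioc_add_one (by omega),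
        Finset.sum_insert (by simp), ih]
      ring
  rw [this]
  have : (0:ℝ) ≤ (1 / 2) ^ (q + T) := by positivity
  linarith

lemma vf_density (q N : ℕ) (hN : 8 * vfQ q ≤ N) (A : Set ℕ)
    (hA : ∀ m, (∃ n ≤ 8 * vfQ q, m + n ∈ vfE q) → m ∈ A) :
    1 - (1 / 2 : ℝ) ^ q ≤
      (((Finset.range (N + 1)).filter (fun n => n ∈ A)).card : ℝ) / ((N : ℝ) + 1) := by
  have hbad : (((Finset.range (N + 1)).filter (fun n => ¬ n ∈ A)).card : ℝ) ≤
      (N + 1) * (1 / 2) ^ q := by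
    have hsub : (Finset.range (N + 1)).filter (fun n => ¬ n ∈ A) ⊆
        (Finset.Ioc q (q + (N + 8 * vfQ q))).biUnion (fun p =>
          (Finset.range (N + 1)).filter (fun m => ∃ n ≤ 8 * vfQ q, m + n ∈ vfD p)) := by
      intro m hm
      simp only [Finset.mem_filter, Finset.mem_biUnion, Finset.mem_range, Finset.mem_Ioc] at hm ⊢
      obtain ⟨p, hp, n, hn, hmn⟩ := vfE_next q m (fun h => hm.2 (hA m h))
      have := vfD_ge p _ (by omega) hmn
      exact ⟨p, ⟨hp, by omega⟩, hm.1, n, hn, hmn⟩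
    have h1 := (Finset.card_le_card hsub).trans Finset.card_biUnion_le
    have h2 : (((Finset.range (N + 1)).filter (fun n => ¬ n ∈ A)).card : ℝ) ≤
        ∑ p ∈ Finset.Ioc q (q + (N + 8 * vfQ q)), (((Finset.range (N + 1)).filter
          (fun m => ∃ n ≤ 8 * vfQ q, m + n ∈ vfD p)).card : ℝ) := by exact_mod_cast h1
    refine h2.trans ((Finset.sum_le_sum fun p hp =>
      vf_count_one q p N (Finset.mem_Ioc.mp hp).1 hN).trans ?_)
    rw [← Finset.mul_sum]
    exact mul_le_mul_of_nonneg_left (vf_geom _ _) (by positivity)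
  have htot := Finset.card_filter_add_card_filter_not (s := Finset.range (N + 1)) (fun n => n ∈ A)
  rw [Finset.card_range] at htot
  have htot' : (((Finset.range (N + 1)).filter (fun n => n ∈ A)).card : ℝ) +
    (((Finset.range (N + 1)).filter (fun n => ¬ n ∈ A)).card : ℝ) = N + 1 := by
    exact_mod_cast htot
  rw [le_div_iff₀ (by positivity)]
  linarith

/-- exponent of the weight products -/
noncomputable def vff : ℕ → ℕ
  | 0 => 0
  | n + 1 => if n + 1 ∈ Set.range vfb then 0 else vff n + 1

lemma vff_b (k : ℕ) : vff (vfb k) = 0 := by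
  rcases h : vfb k with _ | n
  · rfl
  · simp only [vff]
    rw [if_pos ⟨k, h⟩]

lemma vff_succ (n : ℕ) : vff (n + 1) ≤ vff n + 1 := by
  simp only [vff]
  split_ifs <;> omega

lemma vff_add (n s : ℕ) : vff (n + s) ≤ vff n + s := by
  induction s with
  | zero => simp
  | succ s ih => have := vff_succ (n + s); rw [← add_assoc]; omega

lemma vff_spec (n : ℕ) : ∃ k, vfb k + vff n = n ∧ n < vfb (k + 1) := by
  induction n with
  | zero => exact ⟨0, by simp [vfb, vff], by have := vfQ_pos 1; simp [vfb, this]⟩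
  | succ n ih =>
    obtain ⟨k, hk1, hk2⟩ := ih
    by_cases h : n + 1 ∈ Set.range vfb
    · obtain ⟨r, hr⟩ := h
      refine ⟨r, ?_, ?_⟩
      · rw [← hr, vff_b]; simp
      · rw [← hr]; exact vfb_strictMono (by omega)
    · refine ⟨k, ?_, ?_⟩
      · simp only [vff]; rw [if_neg h]; omega
      · have : n + 1 ≠ vfb (k + 1) := fun h' => h ⟨_, h'.symm⟩
        omega

/-- the block sequence -/
noncomputable def vfu {𝕜 : Type*} [RCLike 𝕜] (v : ℕ → ℕ → 𝕜) (j : ℕ) : 𝕜 :=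
  if h : ∃ z : ℕ × ℕ × ℕ, z.2.1 ∈ vfE z.1 ∧ z.2.2 < z.1 ∧ j = z.2.1 + z.2.2 then
    v h.choose.1 h.choose.2.2 else 0

lemma vf_unique (p q n m i i' : ℕ) (hn : n ∈ vfE p) (hm : m ∈ vfE q) (hi : i < p) (hi' : i' < q)
    (h : n + i = m + i') : p = q ∧ n = m ∧ i = i' := by
  have key : ∀ p q n m i i' : ℕ, n ∈ vfE p → m ∈ vfE q → i < p → i' < q → n + i = m + i' →
      m ≤ n → p = q ∧ n = m ∧ i = i' := by
    intro p q n m i i' hn hm hi hi' h hmn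
    by_cases hne : p = q ∧ n = m
    · exact ⟨hne.1, hne.2, by omega⟩
    · have := vfE_sep1 p q n m 0 i hn hm hmn hne hi
      simp only [vfb] at this
      omega
  rcases le_total m n with hmn | hmn
  · exact key p q n m i i' hn hm hi hi' h hmn
  · obtain ⟨h1, h2, h3⟩ := key q p m n i' i hm hn hi' hi h.symm hmn
    exact ⟨h1.symm, h2.symm, h3.symm⟩

lemma vfu_eq {𝕜 : Type*} [RCLike 𝕜] (v : ℕ → ℕ → 𝕜) (p n i : ℕ) (hn : n ∈ vfE p) (hi : i < p) :
    vfu v (n + i) = v p i := by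
  have h : ∃ z : ℕ × ℕ × ℕ, z.2.1 ∈ vfE z.1 ∧ z.2.2 < z.1 ∧ n + i = z.2.1 + z.2.2 :=
    ⟨(p, n, i), hn, hi, rfl⟩
  unfold vfu
  rw [dif_pos h]
  obtain ⟨h1, h2, h3⟩ := h.choose_spec
  obtain ⟨h4, -, h6⟩ := vf_unique _ _ _ _ _ _ hn h1 hi h2 h3
  rw [← h4, ← h6]

lemma vfu_cases {𝕜 : Type*} [RCLike 𝕜] (v : ℕ → ℕ → 𝕜) (j : ℕ) :
    vfu v j = 0 ∨ ∃ p n i, n ∈ vfE p ∧ i < p ∧ j = n + i ∧ vfu v j = v p i := by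
  by_cases h : ∃ z : ℕ × ℕ × ℕ, z.2.1 ∈ vfE z.1 ∧ z.2.2 < z.1 ∧ j = z.2.1 + z.2.2
  · right
    obtain ⟨⟨p, n, i⟩, h1, h2, h3⟩ := h
    refine ⟨p, n, i, h1, h2, h3, ?_⟩
    simp only at h1 h2 h3
    rw [h3]; exact vfu_eq v p n i h1 h2
  · left; unfold vfu; rw [dif_neg h]

/-- decay of the vector -/
lemma vfu_decay {𝕜 : Type*} [RCLike 𝕜] (v : ℕ → ℕ → 𝕜) (hv : ∀ p i, ‖v p i‖ ≤ 2 ^ p) (j K : ℕ)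
    (hj : vfb K ≤ j) : ‖vfu v j‖ / 2 ^ vff j ≤ (1 / 2) ^ K := by
  rcases vfu_cases v j with h | ⟨p, n, i, hn, hi, rfl, h⟩
  · rw [h]; simp
  · rw [h]
    obtain ⟨k, hk1, hk2⟩ := vff_spec (n + i)
    have hKk : K < k + 1 := vfb_strictMono.lt_iff_lt.mp (by omega)
    have := vfE_sep2 p n k i hn hi
    have hf : p + K ≤ vff (n + i) := by omega
    rw [div_le_iff₀ (by positivity)]
    calc ‖v p i‖ ≤ 2 ^ p := hv p i
      _ = (1 / 2) ^ K * 2 ^ (p + K) := by rw [pow_add, one_div, inv_pow]; field_simp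
      _ ≤ _ := by gcongr; norm_num

/-- approximation along the visiting sets -/
lemma vfu_visit {𝕜 : Type*} [RCLike 𝕜] (v : ℕ → ℕ → 𝕜) (hv : ∀ p i, ‖v p i‖ ≤ 2 ^ p)
    (hv0 : ∀ p i, p ≤ i → v p i = 0) (q m j : ℕ) (hq : 0 < q)
    (hm : m ∈ vfE q) : ‖vfu v (j + m) - v q j‖ / 2 ^ vff j ≤ (1 / 2) ^ q := by
  by_cases hjq : j < q
  · rw [add_comm, vfu_eq v q m j hm hjq]; simp
  · rw [hv0 q j (by omega), sub_zero]
    rcases vfu_cases v (j + m) with h | ⟨p, n, i, hn, hi, hj, h⟩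
    · rw [h]; simp
    · rw [h]
      have hne : ¬ (p = q ∧ n = m) := by omega
      have hmn : m ≤ n := by
        by_contra! hlt
        have := vfE_sep1 q p m n 0 0 hm hn hlt.le (by omega) hq
        simp only [vfb] at this
        omega
      obtain ⟨k, hk1, hk2⟩ := vff_spec j
      have := vfE_sep1 p q n m k i hn hm hmn hne hi
      have hf : p + q ≤ vff j := by omega
      rw [div_le_iff₀ (by positivity)]
      calc ‖v p i‖ ≤ 2 ^ p := hv p i
        _ = (1 / 2) ^ q * 2 ^ (p + q) := by rw [pow_add, one_div, inv_pow]; field_simp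
        _ ≤ _ := by gcongr; norm_num

/-- build an element of `c₀` from a null sequence -/
noncomputable def vfMk {𝕜 : Type*} [RCLike 𝕜] (g : ℕ → 𝕜) (h : Tendsto g atTop (𝓝 0)) :
    C₀(ℕ, 𝕜) where
  toFun := g
  continuous_toFun := continuous_of_discreteTopology
  zero_at_infty' := by
    rw [cocompact_eq_cofinite, Nat.cofinite_eq_atTop]; exact h

lemma vf_tendsto {𝕜 : Type*} [RCLike 𝕜] (x : C₀(ℕ, 𝕜)) : Tendsto (fun n => x n) atTop (𝓝 0) := by
  have := x.zero_at_infty'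
  rw [cocompact_eq_cofinite, Nat.cofinite_eq_atTop] at this
  exact this

lemma vf_coord_le {𝕜 : Type*} [RCLike 𝕜] (x : C₀(ℕ, 𝕜)) (n : ℕ) : ‖x n‖ ≤ ‖x‖ :=
  BoundedContinuousFunction.norm_coe_le_norm x.toBCF n

lemma vf_norm_le {𝕜 : Type*} [RCLike 𝕜] (x : C₀(ℕ, 𝕜)) (C : ℝ) (hC : 0 ≤ C)
    (h : ∀ n, ‖x n‖ ≤ C) : ‖x‖ ≤ C :=
  (BoundedContinuousFunction.norm_le (f := x.toBCF) hC).mpr h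

lemma vf_coord_cont {𝕜 : Type*} [RCLike 𝕜] (n : ℕ) : Continuous (fun x : C₀(ℕ, 𝕜) => x n) := by
  refine LipschitzWith.continuous (K := 1) (LipschitzWith.of_dist_le_mul fun x y => ?_)
  rw [dist_eq_norm, dist_eq_norm]
  simpa using vf_coord_le (x - y) n

/-- the weights -/
noncomputable def vfw (𝕜 : Type*) [RCLike 𝕜] : ℕ → 𝕜
  | 0 => 1
  | n + 1 => 2 ^ vff (n + 1) / 2 ^ vff n

lemma vfw_ne (𝕜 : Type*) [RCLike 𝕜] (n : ℕ) : vfw 𝕜 n ≠ 0 := by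
  cases n with
  | zero => simp [vfw]
  | succ n => simp [vfw]

lemma vfw_le (𝕜 : Type*) [RCLike 𝕜] (n : ℕ) : ‖vfw 𝕜 n‖ ≤ 2 := by
  cases n with
  | zero => simp [vfw]
  | succ n =>
    simp only [vfw, norm_div, norm_pow, RCLike.norm_ofNat]
    rw [div_le_iff₀ (by positivity), ← pow_succ']
    exact pow_le_pow_right₀ (by norm_num) (vff_succ n)

/-- the weighted shift -/
noncomputable def vfB (𝕜 : Type*) [RCLike 𝕜] : C₀(ℕ, 𝕜) →L[𝕜] C₀(ℕ, 𝕜) :=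
  LinearMap.mkContinuous
    { toFun := fun x => vfMk (fun n => vfw 𝕜 (n + 1) * x (n + 1)) (by
        have h := ((tendsto_add_atTop_iff_nat 1).mpr (vf_tendsto x)).norm.const_mul 2
        rw [norm_zero, mul_zero] at h
        refine squeeze_zero_norm (fun n => ?_) h
        rw [norm_mul]
        exact mul_le_mul_of_nonneg_right (vfw_le 𝕜 _) (norm_nonneg _))
      map_add' := fun x y => by
        ext n; exact mul_add (vfw 𝕜 (n + 1)) (x (n + 1)) (y (n + 1))
      map_smul' := fun c x => by
        ext n; exact mul_left_comm (vfw 𝕜 (n + 1)) c (x (n + 1)) }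
    2 (fun x => by
      refine vf_norm_le _ _ (by positivity) fun n => ?_
      change ‖vfw 𝕜 (n + 1) * x (n + 1)‖ ≤ _
      rw [norm_mul]
      exact mul_le_mul (vfw_le 𝕜 _) (vf_coord_le x _) (norm_nonneg _) (by norm_num))

lemma vfB_apply {𝕜 : Type*} [RCLike 𝕜] (x : C₀(ℕ, 𝕜)) (n : ℕ) :
    vfB 𝕜 x n = vfw 𝕜 (n + 1) * x (n + 1) := rfl

lemma vfB_iter {𝕜 : Type*} [RCLike 𝕜] (m : ℕ) (x : C₀(ℕ, 𝕜)) (n : ℕ) :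
    ((vfB 𝕜)^[m] x) n = 2 ^ vff (n + m) / 2 ^ vff n * x (n + m) := by
  induction m generalizing n with
  | zero => simp
  | succ m ih =>
    rw [Function.iterate_succ_apply', vfB_apply, ih, vfw]
    have h1 : n + 1 + m = n + (m + 1) := by omega
    rw [h1, ← mul_assoc]
    congr 1
    field_simp

lemma vfb_ge_self (k : ℕ) : k ≤ vfb k := vfb_strictMono.le_apply

lemma vf_not_periodic {𝕜 : Type*} [RCLike 𝕜] :
    ¬ Dense {x : C₀(ℕ, 𝕜) | ∃ n : ℕ, 0 < n ∧ (vfB 𝕜)^[n] x = x} := by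
  intro hd
  have ho : IsOpen {x : C₀(ℕ, 𝕜) | x 0 ≠ 0} := isOpen_ne_fun (vf_coord_cont 0) continuous_const
  have hne : {x : C₀(ℕ, 𝕜) | x 0 ≠ 0}.Nonempty := by
    refine ⟨vfMk (fun n => if n = 0 then 1 else 0) ?_, ?_⟩
    · refine tendsto_const_nhds.congr' ?_
      filter_upwards [eventually_gt_atTop 0] with n hn
      rw [if_neg (by omega)]
    · change (if 0 = 0 then (1 : 𝕜) else 0) ≠ 0
      simp
  obtain ⟨x, hx0, p, hp, hx⟩ := hd.inter_open_nonempty _ ho hne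
  have hx0' : 0 < ‖x 0‖ := norm_pos_iff.mpr hx0
  have hev : ∀ᶠ n in atTop, ‖x n‖ < ‖x 0‖ / 2 ^ p := by
    have := (vf_tendsto x).norm
    rw [norm_zero] at this
    exact this.eventually_lt_const (by positivity)
  obtain ⟨N, hN⟩ := eventually_atTop.mp hev
  -- multiple of p just above `vfb N`
  obtain ⟨s, t, hs, ht⟩ : ∃ s t, s ≤ p ∧ vfb N + s = p * t := by
    refine ⟨p - vfb N % p, vfb N / p + 1, by omega, ?_⟩
    have := Nat.div_add_mod (vfb N) p
    have h2 := Nat.mod_lt (vfb N) hp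
    rw [mul_add]; omega
  have hper : (vfB 𝕜)^[p * t] x = x := by
    rw [Function.iterate_mul]
    exact Function.iterate_fixed hx t
  have h1 := vfB_iter (p * t) x 0
  rw [hper, zero_add] at h1
  have h2 : vff (p * t) ≤ p := by
    rw [← ht]; have := vff_add (vfb N) s; rw [vff_b] at this; omega
  have h3 := hN (p * t) (by rw [← ht]; have := vfb_ge_self N; omega)
  have h4 : ‖x 0‖ = 2 ^ vff (p * t) * ‖x (p * t)‖ := by
    rw [h1]; simp [vff]
  rw [lt_div_iff₀ (by positivity)] at h3
  have h5 : (2:ℝ) ^ vff (p * t) ≤ 2 ^ p := pow_le_pow_right₀ (by norm_num) h2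
  have h6 := mul_le_mul_of_nonneg_right h5 (norm_nonneg (x (p * t)))
  linarith

lemma vf_no_eigen {𝕜 : Type*} [RCLike 𝕜] :
    ¬ (∃ (c : 𝕜) (x : C₀(ℕ, 𝕜)), ‖c‖ = 1 ∧ x ≠ 0 ∧ vfB 𝕜 x = c • x) := by
  rintro ⟨c, x, hc, hx, hB⟩
  obtain ⟨j, hj⟩ : ∃ j, x j ≠ 0 := by
    by_contra! h
    exact hx (by ext n; simpa using h n)
  have hit : ∀ m, (vfB 𝕜)^[m] x = c ^ m • x := by
    intro m
    induction m with
    | zero => simp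
    | succ m ih =>
      rw [Function.iterate_succ_apply', ih, map_smul, hB, smul_smul, pow_succ]
  have hj' : 0 < ‖x j‖ := norm_pos_iff.mpr hj
  have hev : ∀ᶠ n in atTop, ‖x n‖ < ‖x j‖ := by
    have := (vf_tendsto x).norm
    rw [norm_zero] at this
    exact this.eventually_lt_const hj'
  obtain ⟨N, hN⟩ := eventually_atTop.mp hev
  have hb := vfb_ge_self (N + j)
  have h1 := vfB_iter (vfb (N + j) - j) x j
  rw [hit, ZeroAtInftyContinuousMap.smul_apply, show j + (vfb (N + j) - j) = vfb (N + j) by omega,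
    vff_b] at h1
  have h2 := congrArg norm h1
  simp only [norm_smul, norm_pow, hc, one_pow, one_mul, norm_mul, norm_div, RCLike.norm_ofNat,
    pow_zero, norm_one] at h2
  have h3 := hN (vfb (N + j)) (by omega)
  have h4 : (1 : ℝ) / 2 ^ vff j ≤ 1 := by
    rw [div_le_one (by positivity)]; exact one_le_pow₀ (by norm_num)
  have h5 := mul_le_mul_of_nonneg_right h4 (norm_nonneg (x (vfb (N + j))))
  linarith

lemma vf_not_mixing {𝕜 : Type*} [RCLike 𝕜] :
    ¬ (∀ U V : Set C₀(ℕ, 𝕜), IsOpen U → U.Nonempty → IsOpen V → V.Nonempty →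
          ∃ N : ℕ, ∀ n ≥ N, ((fun z => (vfB 𝕜)^[n] z) '' U ∩ V).Nonempty) := by
  intro h
  obtain ⟨N, hN⟩ := h (Metric.ball 0 1) {x | 1 < ‖x 0‖} Metric.isOpen_ball
    ⟨0, Metric.mem_ball_self one_pos⟩
    (isOpen_lt continuous_const (vf_coord_cont 0).norm) (by
      refine ⟨vfMk (fun n => if n = 0 then 2 else 0) ?_, ?_⟩
      · refine tendsto_const_nhds.congr' ?_
        filter_upwards [eventually_gt_atTop 0] with n hn
        rw [if_neg (by omega)]
      · change 1 < ‖if 0 = 0 then (2 : 𝕜) else 0‖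
        simp)
  obtain ⟨y, ⟨z, hz, rfl⟩, hy⟩ := hN (vfb N) (vfb_ge_self N)
  change 1 < ‖((vfB 𝕜)^[vfb N] z) 0‖ at hy
  rw [vfB_iter, zero_add, vff_b] at hy
  have : ‖z (vfb N)‖ < 1 := (vf_coord_le z _).trans_lt (by simpa using hz)
  simp [vff] at hy
  linarith

/-- enumeration of target blocks -/
noncomputable def vfraw (𝕜 : Type*) [RCLike 𝕜] (l : List ℕ) (i : ℕ) : 𝕜 :=
  if h : i < l.length then TopologicalSpace.denseSeq 𝕜 l[i] else 0

/-- target blocks, truncated to admissible ones -/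
noncomputable def vfv (𝕜 : Type*) [RCLike 𝕜] (p i : ℕ) : 𝕜 :=
  if i < p ∧ ‖vfraw 𝕜 (Denumerable.ofNat (List ℕ) p.unpair.1) i‖ ≤ 2 ^ p then
    vfraw 𝕜 (Denumerable.ofNat (List ℕ) p.unpair.1) i else 0

lemma vfv_norm (𝕜 : Type*) [RCLike 𝕜] (p i : ℕ) : ‖vfv 𝕜 p i‖ ≤ 2 ^ p := by
  unfold vfv
  split_ifs with h
  · exact h.2
  · simp

lemma vfv_zero (𝕜 : Type*) [RCLike 𝕜] (p i : ℕ) (h : p ≤ i) : vfv 𝕜 p i = 0 := by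
  unfold vfv
  rw [if_neg (by omega)]

lemma vfv_approx {𝕜 : Type*} [RCLike 𝕜] (z : C₀(ℕ, 𝕜)) (ε : ℝ) (hε : 0 < ε) (q0 : ℕ) :
    ∃ q ≥ q0, ∀ i, ‖vfv 𝕜 q i / 2 ^ vff i - z i‖ ≤ ε := by
  have hev : ∀ᶠ n in atTop, ‖z n‖ < ε := by
    have := (vf_tendsto z).norm
    rw [norm_zero] at this
    exact this.eventually_lt_const hε
  obtain ⟨K, hK⟩ := eventually_atTop.mp hev
  have hd : ∀ i, ∃ a, ‖TopologicalSpace.denseSeq 𝕜 a - z i * 2 ^ vff i‖ < ε := by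
    intro i
    obtain ⟨y, ha, ⟨a, rfl⟩⟩ := Metric.dense_iff.mp (TopologicalSpace.denseRange_denseSeq 𝕜)
      (z i * 2 ^ vff i) ε hε
    · exact ⟨a, by simpa [dist_eq_norm] using ha⟩
  choose a ha using hd
  set l : List ℕ := (List.range K).map a with hl
  have hlen : l.length = K := by simp [hl]
  have hraw : ∀ i, i < K → vfraw 𝕜 l i = TopologicalSpace.denseSeq 𝕜 (a i) := by
    intro i hi
    unfold vfraw
    rw [dif_pos (by omega)]
    simp [hl]
  have hraw0 : ∀ i, K ≤ i → vfraw 𝕜 l i = 0 := by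
    intro i hi
    unfold vfraw
    rw [dif_neg (by omega)]
  obtain ⟨M, hM⟩ : ∃ M : ℕ, ∀ i, ‖vfraw 𝕜 l i‖ ≤ M := by
    obtain ⟨M, hM⟩ := exists_nat_ge (∑ i ∈ Finset.range K, ‖vfraw 𝕜 l i‖)
    refine ⟨M, fun i => ?_⟩
    rcases lt_or_ge i K with h | h
    · exact (Finset.single_le_sum (f := fun i => ‖vfraw 𝕜 l i‖) (fun _ _ => norm_nonneg _)
        (Finset.mem_range.mpr h)).trans hM
    · rw [hraw0 i h]; simp
  set q := Nat.pair (Encodable.encode l) (q0 + K + M) with hq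
  have hqge : q0 + K + M ≤ q := Nat.right_le_pair _ _
  have hv : ∀ i, vfv 𝕜 q i = vfraw 𝕜 l i := by
    intro i
    have hun : Denumerable.ofNat (List ℕ) q.unpair.1 = l := by
      rw [hq, Nat.unpair_pair]; exact Denumerable.ofNat_encode l
    unfold vfv
    rw [hun]
    by_cases hi : i < q
    · rw [if_pos]
      refine ⟨hi, (hM i).trans ?_⟩
      have h1 : M ≤ 2 ^ q := (show M ≤ q by omega).trans Nat.lt_two_pow_self.le
      exact_mod_cast h1
    · rw [if_neg (fun h => hi h.1), hraw0 i (by omega)]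
  refine ⟨q, by omega, fun i => ?_⟩
  rw [hv]
  rcases lt_or_ge i K with h | h
  · rw [hraw i h]
    have h2 : TopologicalSpace.denseSeq 𝕜 (a i) / 2 ^ vff i - z i =
      (TopologicalSpace.denseSeq 𝕜 (a i) - z i * 2 ^ vff i) / 2 ^ vff i := by field_simp
    rw [h2, norm_div, norm_pow, RCLike.norm_ofNat]
    exact (div_le_self (norm_nonneg _) (one_le_pow₀ (by norm_num))).trans (ha i).le
  · rw [hraw0 i h, zero_div, zero_sub, norm_neg]; exact (hK i h).le

lemma vf_tendsto_x {𝕜 : Type*} [RCLike 𝕜] :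
    Tendsto (fun j => vfu (vfv 𝕜) j / 2 ^ vff j) atTop (𝓝 0) := by
  rw [Metric.tendsto_atTop]
  intro ε hε
  obtain ⟨K, hK⟩ := exists_pow_lt_of_lt_one hε (show (1 / 2 : ℝ) < 1 by norm_num)
  refine ⟨vfb K, fun j hj => ?_⟩
  rw [dist_zero_right, norm_div, norm_pow, RCLike.norm_ofNat]
  exact (vfu_decay _ (vfv_norm 𝕜) j K hj).trans_lt hK

/-- the very frequently hypercyclic vector -/
noncomputable def vfx (𝕜 : Type*) [RCLike 𝕜] : C₀(ℕ, 𝕜) :=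
  vfMk (fun j => vfu (vfv 𝕜) j / 2 ^ vff j) vf_tendsto_x

lemma vfx_visit {𝕜 : Type*} [RCLike 𝕜] (z : C₀(ℕ, 𝕜)) (ε : ℝ) (q m : ℕ) (hq : 0 < q)
    (hz : ∀ i, ‖vfv 𝕜 q i / 2 ^ vff i - z i‖ ≤ ε) (hm : m ∈ vfE q) :
    ‖(vfB 𝕜)^[m] (vfx 𝕜) - z‖ ≤ (1 / 2) ^ q + ε := by
  have hε : 0 ≤ ε := (norm_nonneg _).trans (hz 0)
  refine vf_norm_le _ _ (by positivity) fun j => ?_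
  rw [ZeroAtInftyContinuousMap.sub_apply, vfB_iter]
  have h1 : vfx 𝕜 (j + m) = vfu (vfv 𝕜) (j + m) / 2 ^ vff (j + m) := rfl
  have h2 : (2 : 𝕜) ^ vff (j + m) / 2 ^ vff j * (vfu (vfv 𝕜) (j + m) / 2 ^ vff (j + m)) - z j =
      (vfu (vfv 𝕜) (j + m) - vfv 𝕜 q j) / 2 ^ vff j + (vfv 𝕜 q j / 2 ^ vff j - z j) := by
    field_simp; ring
  rw [h1, h2]
  refine (norm_add_le _ _).trans (add_le_add ?_ (hz j))
  rw [norm_div, norm_pow, RCLike.norm_ofNat]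
  exact vfu_visit _ (vfv_norm 𝕜) (vfv_zero 𝕜) q m j hq hm

lemma vf_ratio_le (A : Set ℕ) (N : ℕ) :
    (((Finset.range (N + 1)).filter (fun n => n ∈ A)).card : ℝ) / ((N : ℝ) + 1) ≤ 1 := by
  rw [div_le_one (by positivity)]
  have := Finset.card_filter_le (Finset.range (N + 1)) (fun n => n ∈ A)
  rw [Finset.card_range] at this
  exact_mod_cast this

lemma vf_lowerDensity_le (A : Set ℕ) : lowerDensity A ≤ 1 := by
  unfold lowerDensity
  refine Filter.liminf_le_of_le ?_ ?_
  · exact Filter.isBoundedUnder_of ⟨0, fun N => div_nonneg (Nat.cast_nonneg _) (by positivity)⟩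
  · intro b hb
    obtain ⟨N, hN⟩ := hb.exists
    exact hN.trans (vf_ratio_le A N)

lemma vf_le_lowerDensity (A : Set ℕ) (c : ℝ) (N0 : ℕ)
    (h : ∀ N ≥ N0, c ≤ (((Finset.range (N + 1)).filter (fun n => n ∈ A)).card : ℝ) / ((N : ℝ) + 1)) :
    c ≤ lowerDensity A := by
  unfold lowerDensity
  refine Filter.le_liminf_of_le ?_ (eventually_atTop.mpr ⟨N0, h⟩)
  exact Filter.IsBoundedUnder.isCoboundedUnder_ge
    ⟨1, Filter.eventually_map.mpr (Filter.Eventually.of_forall fun N => vf_ratio_le A N)⟩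

lemma vf_main {𝕜 : Type*} [RCLike 𝕜] (U : Set C₀(ℕ, 𝕜)) (hU : IsOpen U) (hne : U.Nonempty) :
    Filter.Tendsto
      (fun N : ℕ => lowerDensity {m : ℕ | ∃ n ≤ N, (⇑(vfB 𝕜))^[m + n] (vfx 𝕜) ∈ U})
      Filter.atTop (nhds 1) := by
  obtain ⟨z, hz⟩ := hne
  obtain ⟨ε, hε, hball⟩ := Metric.isOpen_iff.mp hU z hz
  rw [Metric.tendsto_atTop]
  intro δ hδ
  obtain ⟨K1, hK1⟩ := exists_pow_lt_of_lt_one (show 0 < ε / 2 by positivity)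
    (show (1 / 2 : ℝ) < 1 by norm_num)
  obtain ⟨K2, hK2⟩ := exists_pow_lt_of_lt_one hδ (show (1 / 2 : ℝ) < 1 by norm_num)
  obtain ⟨q, hq, hap⟩ := vfv_approx z (ε / 2) (by positivity) (K1 + K2 + 1)
  have hq1 : (1 / 2 : ℝ) ^ q < ε / 2 :=
    (pow_le_pow_of_le_one (by norm_num) (by norm_num) (by omega)).trans_lt hK1
  have hq2 : (1 / 2 : ℝ) ^ q < δ :=
    (pow_le_pow_of_le_one (by norm_num) (by norm_num) (by omega)).trans_lt hK2
  refine ⟨8 * vfQ q, fun N hN => ?_⟩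
  have h1 := vf_lowerDensity_le {m : ℕ | ∃ n ≤ N, (⇑(vfB 𝕜))^[m + n] (vfx 𝕜) ∈ U}
  have h2 : 1 - (1 / 2 : ℝ) ^ q ≤
      lowerDensity {m : ℕ | ∃ n ≤ N, (⇑(vfB 𝕜))^[m + n] (vfx 𝕜) ∈ U} := by
    refine vf_le_lowerDensity _ _ (8 * vfQ q) fun N' hN' => vf_density q N' hN' _ ?_
    rintro m ⟨n, hn, hmn⟩
    refine ⟨n, hn.trans hN, hball ?_⟩
    rw [Metric.mem_ball, dist_eq_norm]
    have := vfx_visit z (ε / 2) q (m + n) (by omega) hap hmn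
    linarith
  rw [Real.dist_eq, abs_lt]
  constructor <;> linarith

/-- There exists a bounded sequence `w` of nonzero scalars such that the weighted backward
shift `B_w` on `c₀` (the continuous linear operator `Bw` with `(Bw x) n = w (n+1) * x (n+1)`)
is very frequently hypercyclic (for every nonempty open `U`, with `A = {n | B_w^n x ∈ U}`,
the lower density of `⋃_{n ≤ N} (A - n)` tends to `1`) but not chaotic; moreover it has no
unimodular eigenvalue and is not topologically mixing. -/
theorem exists_weightedShift_veryFrequentlyHC_not_chaotic {𝕜 : Type*} [RCLike 𝕜] :
    ∃ (w : ℕ → 𝕜) (Bw : C₀(ℕ, 𝕜) →L[𝕜] C₀(ℕ, 𝕜)),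
      (∀ n, w n ≠ 0) ∧ (∃ C : ℝ, ∀ n, ‖w n‖ ≤ C) ∧
      (∀ (x : C₀(ℕ, 𝕜)) (n : ℕ), Bw x n = w (n + 1) * x (n + 1)) ∧
      -- very frequently hypercyclic
      (∃ x : C₀(ℕ, 𝕜), ∀ U : Set C₀(ℕ, 𝕜), IsOpen U → U.Nonempty →
        Filter.Tendsto
          (fun N : ℕ => lowerDensity {m : ℕ | ∃ n ≤ N, (⇑Bw)^[m + n] x ∈ U})
          Filter.atTop (nhds 1)) ∧
      -- not chaotic
      ¬ ((∃ x : C₀(ℕ, 𝕜), Dense (Set.range fun n : ℕ => (⇑Bw)^[n] x)) ∧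
          Dense {x : C₀(ℕ, 𝕜) | ∃ n : ℕ, 0 < n ∧ (⇑Bw)^[n] x = x}) ∧
      -- no unimodular eigenvalues
      ¬ (∃ (c : 𝕜) (x : C₀(ℕ, 𝕜)), ‖c‖ = 1 ∧ x ≠ 0 ∧ Bw x = c • x) ∧
      -- not topologically mixing
      ¬ (∀ U V : Set C₀(ℕ, 𝕜), IsOpen U → U.Nonempty → IsOpen V → V.Nonempty →
          ∃ N : ℕ, ∀ n ≥ N, ((fun z => (⇑Bw)^[n] z) '' U ∩ V).Nonempty) := by
  exact ⟨vfw 𝕜, vfB 𝕜, vfw_ne 𝕜, ⟨2, vfw_le 𝕜⟩, vfB_apply, ⟨vfx 𝕜, vf_main⟩,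
    fun h => vf_not_periodic h.2, vf_no_eigen, vf_not_mixing⟩
end
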